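/- arXiv:1410.0402 — 2 statements merged into one kernel-verified Lean document; each statement's English description precedes it below -/
import Mathlib

section
/- For every (a, b) ∈ Q_k and every u ∈ H: u ∈ K(a, b) if and only if u ∈ S_k(a, b) ∩ S^k(a, b) and ⟨u, y⟩ = ∫_Ω ( b u⁺ − a u⁻ ) y dμ for all y ∈ E_k. Consequently K(a, b) ⊆ { u ∈ S_k(a, b) ∩ S^k(a, b) : I(u, a, b) = 0 }. -/
open MeasureTheory RealInnerProductSpace

/-!
On `L²` the functions `f ↦ ‖f⁺‖²` and `f ↦ ‖f⁻‖²` are convex with gradients `2 f⁺` and `-2 f⁻`.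
Subtracting a multiple `c ‖f‖² = c ‖f⁺‖² + c ‖f⁻‖²` with `c ≤ a, b`, or `c ≥ a, b`, therefore gives
`c ‖h‖² ≤ Q (f + h) - Q f - 2 ⟪b f⁺ - a f⁻, h⟫`, respectively `≥`, for `Q f = b ‖f⁺‖² + a ‖f⁻‖²`.
With `c = λ_{k-1}` the second-order remainder of `I` is nonpositive along `N_{k-1}`, and with
`c = λ_{k+1}` it is nonnegative along `M_k`. Hence the derivative of `I` at `u` vanishes on
`N_{k-1}` exactly when `u` maximizes `I` over `u + N_{k-1}`, that is `u ∈ S_k`, and it vanishes on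
`M_k` exactly when `u` minimizes `I` over `u + M_k`, that is `u ∈ S^k`. As `N_{k-1}`, `E_k` and
`M_k` together span `H`, the condition on `E_k` is all that is missing for `u ∈ K`. Finally, `I` is
homogeneous of degree two, so it vanishes at its critical points.
-/

/-! ### Unique extrema -/

section UniqueExtrema

variable {α β : Type*} [Preorder β]

/-- `a` is the unique maximum point of `f` on `s`: it is a maximum point, and every maximum point
equals it. This is the sense in which `θ(w, a, b)` is determined. -/
def IsUniqueMaxOn (f : α → β) (s : Set α) (a : α) : Prop :=
  a ∈ s ∧ IsMaxOn f s a ∧ ∀ x ∈ s, IsMaxOn f s x → x = a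

/-- `a` is the unique minimum point of `f` on `s`, as in `IsUniqueMaxOn`; this is the sense in which
`τ(v, a, b)` is determined. -/
def IsUniqueMinOn (f : α → β) (s : Set α) (a : α) : Prop :=
  a ∈ s ∧ IsMinOn f s a ∧ ∀ x ∈ s, IsMinOn f s x → x = a

lemma IsUniqueMinOn.dual {f : α → β} {s : Set α} {a : α} (h : IsUniqueMinOn f s a) :
    IsUniqueMaxOn (OrderDual.toDual ∘ f) s a :=
  h

variable {R G : Type*} [Ring R] [AddCommGroup G] [Module R G] {N W : Submodule R G} {J : G → β}
  {θ : G → G} {u : G}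

lemma exists_eq_add_iff_forall_add_le (hNW : Codisjoint N W)
    (hθ : ∀ w ∈ W, IsUniqueMaxOn (fun v ↦ J (v + w)) N (θ w)) :
    (∃ w ∈ W, u = θ w + w) ↔ ∀ v ∈ N, J (u + v) ≤ J u := by
  constructor
  · rintro ⟨w, hw, rfl⟩ v hv
    obtain ⟨hθN, hθmax, -⟩ := hθ w hw
    simpa only [add_right_comm] using isMaxOn_iff.1 hθmax (θ w + v) (N.add_mem hθN hv)
  · intro hu
    obtain ⟨v, w, hv, hw, rfl⟩ := Submodule.codisjoint_iff_exists_add_eq.1 hNW u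
    have hmax : IsMaxOn (fun v' ↦ J (v' + w)) N v := isMaxOn_iff.2 fun v' hv' ↦ by
      simpa only [add_sub_cancel, add_right_comm v w] using hu (v' - v) (N.sub_mem hv' hv)
    exact ⟨w, hw, congrArg (· + w) ((hθ w hw).2.2 v hv hmax)⟩

lemma exists_eq_add_iff_forall_le_add (hNW : Codisjoint N W)
    (hθ : ∀ w ∈ W, IsUniqueMinOn (fun v ↦ J (w + v)) N (θ w)) :
    (∃ w ∈ W, u = w + θ w) ↔ ∀ v ∈ N, J u ≤ J (u + v) := by
  simp only [add_comm _ (θ _)]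
  refine exists_eq_add_iff_forall_add_le (J := OrderDual.toDual ∘ J) hNW fun w hw ↦ ?_
  simpa only [add_comm w, Function.comp_def] using (hθ w hw).dual

end UniqueExtrema

/-! ### Critical points and one-sided remainder estimates -/

section LineDeriv

lemma hasDerivAt_of_quadratic_bounds {f : ℝ → ℝ} {f' x c d : ℝ}
    (hc : ∀ y, c * (y - x) ^ 2 ≤ f y - f x - (y - x) * f')
    (hd : ∀ y, f y - f x - (y - x) * f' ≤ d * (y - x) ^ 2) : HasDerivAt f f' x := by
  rw [hasDerivAt_iff_isLittleO]
  refine (Asymptotics.IsBigO.of_bound (max |c| |d|) (.of_forall fun y ↦ ?_)).trans_isLittleO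
    (Asymptotics.isLittleO_pow_sub_sub x one_lt_two)
  have habs := abs_le_max_abs_abs (hc y) (hd y)
  rw [abs_mul, abs_mul, ← max_mul_of_nonneg _ _ (abs_nonneg _)] at habs
  simpa using habs

variable {V : Type*} [AddCommGroup V] [Module ℝ V] {J J' : V → ℝ} {N : Submodule ℝ V} {u : V}

lemma forall_add_le_iff_forall_lineDeriv_eq_zero (hJ : ∀ h ∈ N, HasLineDerivAt ℝ J (J' h) u h)
    (hle : ∀ h ∈ N, J (u + h) ≤ J u + J' h) :
    (∀ h ∈ N, J (u + h) ≤ J u) ↔ ∀ h ∈ N, J' h = 0 := by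
  refine ⟨fun hmax h hh ↦ ?_, fun hzero h hh ↦ by simpa [hzero h hh] using hle h hh⟩
  have hloc : IsLocalMax (fun t : ℝ ↦ J (u + t • h)) 0 :=
    .of_forall fun t ↦ by simpa using hmax (t • h) (N.smul_mem t hh)
  exact hloc.hasDerivAt_eq_zero (hJ h hh)

lemma forall_le_add_iff_forall_lineDeriv_eq_zero (hJ : ∀ h ∈ N, HasLineDerivAt ℝ J (J' h) u h)
    (hle : ∀ h ∈ N, J u + J' h ≤ J (u + h)) :
    (∀ h ∈ N, J u ≤ J (u + h)) ↔ ∀ h ∈ N, J' h = 0 := by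
  have hneg := forall_add_le_iff_forall_lineDeriv_eq_zero (J := -J) (J' := -J') (N := N) (u := u)
    (fun h hh ↦ (hJ h hh).neg) fun h hh ↦ by simpa [add_comm] using neg_le_neg (hle h hh)
  simpa using hneg

end LineDeriv

/-! ### Positive and negative parts in `L²` -/

section PosPart

variable {Ω : Type*} [MeasurableSpace Ω] {μ : Measure Ω}

lemma Lp_posPart_sub_negPart {p : ENNReal} (f : Lp ℝ p μ) :
    Lp.posPart f - Lp.negPart f = f := by
  apply Lp.ext
  filter_upwards [Lp.coeFn_sub (Lp.posPart f) (Lp.negPart f), Lp.coeFn_posPart f,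
    Lp.coeFn_negPart_eq_max f] with x hsub hpos hneg
  rw [hsub, Pi.sub_apply, hpos, hneg, max_zero_sub_max_neg_zero_eq_self]

lemma inner_posPart_posPart_nonneg (f g : Lp ℝ 2 μ) : 0 ≤ ⟪Lp.posPart f, Lp.posPart g⟫ := by
  rw [L2.inner_def]
  apply integral_nonneg_of_ae
  filter_upwards [Lp.coeFn_posPart f, Lp.coeFn_posPart g] with x hf hg
  rw [hf, hg]
  exact mul_nonneg (le_max_right _ _) (le_max_right _ _)

lemma inner_posPart_negPart (f : Lp ℝ 2 μ) : ⟪Lp.posPart f, Lp.negPart f⟫ = 0 := by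
  rw [L2.inner_def]
  apply integral_eq_zero_of_ae
  filter_upwards [Lp.coeFn_posPart f, Lp.coeFn_negPart_eq_max f] with x hpos hneg
  rw [hpos, hneg]
  rcases le_total (f x) 0 with hx | hx <;> simp [hx]

lemma inner_posPart_self (f : Lp ℝ 2 μ) : ⟪Lp.posPart f, f⟫ = ‖Lp.posPart f‖ ^ 2 := by
  nth_rw 2 [← Lp_posPart_sub_negPart f]
  rw [inner_sub_right, inner_posPart_negPart, sub_zero, real_inner_self_eq_norm_sq]

lemma inner_negPart_self (f : Lp ℝ 2 μ) : ⟪Lp.negPart f, f⟫ = -‖Lp.negPart f‖ ^ 2 := by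
  rw [← neg_neg f, inner_neg_right, neg_neg f]
  exact congrArg Neg.neg (inner_posPart_self (-f))

lemma norm_sq_eq_posPart_add_negPart (f : Lp ℝ 2 μ) :
    ‖f‖ ^ 2 = ‖Lp.posPart f‖ ^ 2 + ‖Lp.negPart f‖ ^ 2 := by
  rw [← real_inner_self_eq_norm_sq f]
  nth_rw 1 [← Lp_posPart_sub_negPart f]
  rw [inner_sub_left, inner_posPart_self, inner_negPart_self, sub_neg_eq_add]

lemma norm_sq_posPart_add_ge (f h : Lp ℝ 2 μ) :
    ‖Lp.posPart f‖ ^ 2 + 2 * ⟪Lp.posPart f, h⟫ ≤ ‖Lp.posPart (f + h)‖ ^ 2 := by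
  -- With `g = f + h`, the difference of the two sides is `‖g⁺ - f⁺‖² + 2 ⟪f⁺, g⁻⟫`.
  set g := f + h with hg
  have hh : h = Lp.posPart g - Lp.negPart g - f := by rw [Lp_posPart_sub_negPart, hg]; abel
  rw [hh, inner_sub_right, inner_sub_right, inner_posPart_self]
  have hnonneg : 0 ≤ ⟪Lp.posPart f, Lp.negPart g⟫ := inner_posPart_posPart_nonneg f (-g)
  have hsq := norm_sub_sq_real (Lp.posPart f) (Lp.posPart g)
  linarith [sq_nonneg ‖Lp.posPart f - Lp.posPart g‖]

lemma norm_sq_negPart_add_ge (f h : Lp ℝ 2 μ) :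
    ‖Lp.negPart f‖ ^ 2 - 2 * ⟪Lp.negPart f, h⟫ ≤ ‖Lp.negPart (f + h)‖ ^ 2 := by
  have hneg := norm_sq_posPart_add_ge (-f) (-h)
  rwa [inner_neg_right, ← neg_add, mul_neg, ← sub_eq_add_neg] at hneg

end PosPart

/-! ### The asymmetric quadratic form -/

section Jump

variable {Ω : Type*} [MeasurableSpace Ω] {μ : Measure Ω} {a b c : ℝ}

/-- The jumping nonlinearity `b f⁺ - a f⁻` on `L²`; note that, as in the paper, the second
parameter belongs to the positive part. -/
noncomputable def jump (a b : ℝ) (f : Lp ℝ 2 μ) : Lp ℝ 2 μ :=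
  b • Lp.posPart f - a • Lp.negPart f

/-- The quadratic form `b ‖f⁺‖² + a ‖f⁻‖²` on `L²`, half of which has the gradient `jump a b f`. -/
noncomputable def jumpForm (a b : ℝ) (f : Lp ℝ 2 μ) : ℝ :=
  b * ‖Lp.posPart f‖ ^ 2 + a * ‖Lp.negPart f‖ ^ 2

lemma inner_jump (a b : ℝ) (f h : Lp ℝ 2 μ) :
    ⟪jump a b f, h⟫ = b * ⟪Lp.posPart f, h⟫ - a * ⟪Lp.negPart f, h⟫ := by
  rw [jump, inner_sub_left, real_inner_smul_left, real_inner_smul_left]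

lemma inner_jump_self (a b : ℝ) (f : Lp ℝ 2 μ) : ⟪jump a b f, f⟫ = jumpForm a b f := by
  rw [inner_jump, inner_posPart_self, inner_negPart_self, jumpForm]
  ring

lemma integral_jump_mul (a b : ℝ) (f h : Lp ℝ 2 μ) :
    ∫ x, (b * Lp.posPart f x - a * Lp.negPart f x) * h x ∂μ = ⟪jump a b f, h⟫ := by
  rw [L2.inner_def]
  apply integral_congr_ae
  filter_upwards [Lp.coeFn_sub (b • Lp.posPart f) (a • Lp.negPart f),
    Lp.coeFn_smul b (Lp.posPart f), Lp.coeFn_smul a (Lp.negPart f)] with x hsub hpos hneg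
  rw [jump, hsub, Pi.sub_apply, hpos, hneg]
  simp [mul_comm]

lemma integral_sq_eq_norm_sq (f : Lp ℝ 2 μ) : ∫ x, f x ^ 2 ∂μ = ‖f‖ ^ 2 := by
  rw [← real_inner_self_eq_norm_sq, L2.inner_def]
  simp [sq]

lemma integral_jumpForm (a b : ℝ) (f : Lp ℝ 2 μ) :
    ∫ x, (b * Lp.posPart f x ^ 2 + a * Lp.negPart f x ^ 2) ∂μ = jumpForm a b f := by
  rw [integral_add ((Lp.memLp _).integrable_sq.const_mul b)
    ((Lp.memLp _).integrable_sq.const_mul a), integral_const_mul, integral_const_mul,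
    integral_sq_eq_norm_sq, integral_sq_eq_norm_sq, jumpForm]

lemma jumpForm_add_ge (ha : c ≤ a) (hb : c ≤ b) (f h : Lp ℝ 2 μ) :
    jumpForm a b f + 2 * ⟪jump a b f, h⟫ + c * ‖h‖ ^ 2 ≤ jumpForm a b (f + h) := by
  have hpos := mul_le_mul_of_nonneg_left (norm_sq_posPart_add_ge f h) (sub_nonneg.2 hb)
  have hneg := mul_le_mul_of_nonneg_left (norm_sq_negPart_add_ge f h) (sub_nonneg.2 ha)
  have hinner : ⟪f, h⟫ = ⟪Lp.posPart f, h⟫ - ⟪Lp.negPart f, h⟫ := by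
    rw [← inner_sub_left, Lp_posPart_sub_negPart]
  have hsq := norm_add_sq_real f h
  rw [norm_sq_eq_posPart_add_negPart (f + h), norm_sq_eq_posPart_add_negPart f, hinner] at hsq
  rw [inner_jump, jumpForm, jumpForm]
  linear_combination hpos + hneg - c * hsq

lemma jumpForm_add_le (ha : a ≤ c) (hb : b ≤ c) (f h : Lp ℝ 2 μ) :
    jumpForm a b (f + h) ≤ jumpForm a b f + 2 * ⟪jump a b f, h⟫ + c * ‖h‖ ^ 2 := by
  have hge := jumpForm_add_ge (neg_le_neg ha) (neg_le_neg hb) f h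
  simp only [inner_jump, jumpForm] at hge ⊢
  linarith

end Jump

/-! ### The Dancer–Fučík functional -/

section Fucik

variable {Ω : Type*} [MeasurableSpace Ω] {μ : Measure Ω}
  {H : Type*} [SeminormedAddCommGroup H] [InnerProductSpace ℝ H]
  (ι : H →ₗ[ℝ] Lp ℝ 2 μ) (a b : ℝ)

/-- The functional `I(u, a, b) = ½ ‖u‖² - ½ ∫ (b (u⁺)² + a (u⁻)²)`; the map `ι` plays the role
of the inclusion of `H` into `L²`. -/
noncomputable def fucikEnergy (u : H) : ℝ :=
  ‖u‖ ^ 2 / 2 - (∫ x, (b * Lp.posPart (ι u) x ^ 2 + a * Lp.negPart (ι u) x ^ 2) ∂μ) / 2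

/-- The set `K(a, b)` of weak solutions of the Dancer–Fučík equation. -/
def fucikSolutions : Set H :=
  {u | ∀ v, ⟪u, v⟫ = ∫ x, (b * Lp.posPart (ι u) x - a * Lp.negPart (ι u) x) * ι v x ∂μ}

/-- The derivative of `fucikEnergy ι a b` at `u`, as a linear functional of the direction; it need
not be continuous because `ι` need not be. -/
noncomputable def fucikEnergyDeriv (u : H) : H →ₗ[ℝ] ℝ :=
  innerₛₗ ℝ u - innerₛₗ ℝ (jump a b (ι u)) ∘ₗ ι

variable {ι a b} {c : ℝ} {u : H}

lemma fucikEnergyDeriv_apply (h : H) :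
    fucikEnergyDeriv ι a b u h = ⟪u, h⟫ - ⟪jump a b (ι u), ι h⟫ :=
  rfl

lemma fucikEnergyDeriv_eq_zero_iff {h : H} :
    fucikEnergyDeriv ι a b u h = 0 ↔
      ⟪u, h⟫ = ∫ x, (b * Lp.posPart (ι u) x - a * Lp.negPart (ι u) x) * ι h x ∂μ := by
  rw [fucikEnergyDeriv_apply, sub_eq_zero, integral_jump_mul]

lemma mem_fucikSolutions_iff : u ∈ fucikSolutions ι a b ↔ ∀ h, fucikEnergyDeriv ι a b u h = 0 :=
  forall_congr' fun _ ↦ fucikEnergyDeriv_eq_zero_iff.symm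

lemma fucikEnergy_eq_half_fucikEnergyDeriv (u : H) :
    fucikEnergy ι a b u = fucikEnergyDeriv ι a b u u / 2 := by
  rw [fucikEnergy, fucikEnergyDeriv_apply, real_inner_self_eq_norm_sq, inner_jump_self,
    integral_jumpForm, sub_div]

lemma fucikEnergy_add_le (ha : c ≤ a) (hb : c ≤ b) (u h : H) :
    fucikEnergy ι a b (u + h) ≤
      fucikEnergy ι a b u + fucikEnergyDeriv ι a b u h + (‖h‖ ^ 2 - c * ‖ι h‖ ^ 2) / 2 := by
  have hform := jumpForm_add_ge ha hb (ι u) (ι h)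
  rw [fucikEnergy, fucikEnergy, integral_jumpForm, integral_jumpForm, map_add, norm_add_sq_real,
    fucikEnergyDeriv_apply]
  linarith

lemma fucikEnergy_add_ge (ha : a ≤ c) (hb : b ≤ c) (u h : H) :
    fucikEnergy ι a b u + fucikEnergyDeriv ι a b u h + (‖h‖ ^ 2 - c * ‖ι h‖ ^ 2) / 2 ≤
      fucikEnergy ι a b (u + h) := by
  have hform := jumpForm_add_le ha hb (ι u) (ι h)
  rw [fucikEnergy, fucikEnergy, integral_jumpForm, integral_jumpForm, map_add, norm_add_sq_real,
    fucikEnergyDeriv_apply]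
  linarith

lemma hasLineDerivAt_fucikEnergy (u h : H) :
    HasLineDerivAt ℝ (fucikEnergy ι a b) (fucikEnergyDeriv ι a b u h) u h := by
  refine hasDerivAt_of_quadratic_bounds (c := (‖h‖ ^ 2 - max a b * ‖ι h‖ ^ 2) / 2)
    (d := (‖h‖ ^ 2 - min a b * ‖ι h‖ ^ 2) / 2) (fun t ↦ ?_) fun t ↦ ?_
  · have hge := fucikEnergy_add_ge (ι := ι) (le_max_left a b) (le_max_right a b) u (t • h)
    simp only [map_smul, smul_eq_mul, norm_smul, mul_pow, Real.norm_eq_abs, sq_abs] at hge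
    simp only [sub_zero, zero_smul, add_zero]
    linarith
  · have hle := fucikEnergy_add_le (ι := ι) (min_le_left a b) (min_le_right a b) u (t • h)
    simp only [map_smul, smul_eq_mul, norm_smul, mul_pow, Real.norm_eq_abs, sq_abs] at hle
    simp only [sub_zero, zero_smul, add_zero]
    linarith

lemma forall_fucikEnergy_add_le_iff {N : Submodule ℝ H} (ha : c ≤ a) (hb : c ≤ b)
    (hN : ∀ v ∈ N, ‖v‖ ^ 2 ≤ c * ‖ι v‖ ^ 2) :
    (∀ v ∈ N, fucikEnergy ι a b (u + v) ≤ fucikEnergy ι a b u) ↔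
      ∀ v ∈ N, fucikEnergyDeriv ι a b u v = 0 :=
  forall_add_le_iff_forall_lineDeriv_eq_zero (fun v _ ↦ hasLineDerivAt_fucikEnergy u v)
    fun v hv ↦ by linarith [fucikEnergy_add_le (ι := ι) ha hb u v, hN v hv]

lemma forall_fucikEnergy_le_add_iff {M : Submodule ℝ H} (ha : a ≤ c) (hb : b ≤ c)
    (hM : ∀ w ∈ M, c * ‖ι w‖ ^ 2 ≤ ‖w‖ ^ 2) :
    (∀ w ∈ M, fucikEnergy ι a b u ≤ fucikEnergy ι a b (u + w)) ↔
      ∀ w ∈ M, fucikEnergyDeriv ι a b u w = 0 :=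
  forall_le_add_iff_forall_lineDeriv_eq_zero (fun w _ ↦ hasLineDerivAt_fucikEnergy u w)
    fun w hw ↦ by linarith [fucikEnergy_add_ge (ι := ι) ha hb u w, hM w hw]

lemma fucikEnergy_eq_zero_of_mem_fucikSolutions (hu : u ∈ fucikSolutions ι a b) :
    fucikEnergy ι a b u = 0 := by
  rw [fucikEnergy_eq_half_fucikEnergyDeriv, mem_fucikSolutions_iff.1 hu, zero_div]

lemma mem_fucikSolutions_iff_of_sup_eq_top {N E M : Submodule ℝ H} (hsup : N ⊔ E ⊔ M = ⊤) :
    u ∈ fucikSolutions ι a b ↔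
      ((∀ v ∈ N, fucikEnergyDeriv ι a b u v = 0) ∧ ∀ w ∈ M, fucikEnergyDeriv ι a b u w = 0) ∧
        ∀ y ∈ E, fucikEnergyDeriv ι a b u y = 0 := by
  rw [mem_fucikSolutions_iff]
  refine ⟨fun hu ↦ ⟨⟨fun v _ ↦ hu v, fun w _ ↦ hu w⟩, fun y _ ↦ hu y⟩, ?_⟩
  rintro ⟨⟨hN, hM⟩, hE⟩ h
  have hker : N ⊔ E ⊔ M ≤ (fucikEnergyDeriv ι a b u).ker := sup_le (sup_le hN hE) hM
  exact hker (hsup ▸ Submodule.mem_top)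

theorem K_eq_inter_null_characterization_general {lam₀ lam₂ : ℝ} {N E M : Submodule ℝ H}
    (hsup : N ⊔ E ⊔ M = ⊤)
    (hN : ∀ v ∈ N, ‖v‖ ^ 2 ≤ lam₀ * ‖ι v‖ ^ 2) (hM : ∀ w ∈ M, lam₂ * ‖ι w‖ ^ 2 ≤ ‖w‖ ^ 2)
    (ha : a ∈ Set.Icc lam₀ lam₂) (hb : b ∈ Set.Icc lam₀ lam₂) {θ τ : H → H}
    (hθ : ∀ w ∈ E ⊔ M, IsUniqueMaxOn (fun v ↦ fucikEnergy ι a b (v + w)) N (θ w))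
    (hτ : ∀ v ∈ N ⊔ E, IsUniqueMinOn (fun w ↦ fucikEnergy ι a b (v + w)) M (τ v)) :
    (∀ u, u ∈ fucikSolutions ι a b ↔
      u ∈ {u | ∃ w ∈ E ⊔ M, u = θ w + w} ∩ {u | ∃ v ∈ N ⊔ E, u = v + τ v} ∧ ∀ y ∈ E,
        ⟪u, y⟫ = ∫ x, (b * Lp.posPart (ι u) x - a * Lp.negPart (ι u) x) * ι y x ∂μ) ∧
      fucikSolutions ι a b ⊆
        {u ∈ {u | ∃ w ∈ E ⊔ M, u = θ w + w} ∩ {u | ∃ v ∈ N ⊔ E, u = v + τ v} |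
          fucikEnergy ι a b u = 0} := by
  have hSN (u : H) : (∃ w ∈ E ⊔ M, u = θ w + w) ↔ ∀ v ∈ N, fucikEnergyDeriv ι a b u v = 0 :=
    (exists_eq_add_iff_forall_add_le (codisjoint_iff.2 (sup_assoc N E M ▸ hsup)) hθ).trans
      (forall_fucikEnergy_add_le_iff ha.1 hb.1 hN)
  have hSM (u : H) : (∃ v ∈ N ⊔ E, u = v + τ v) ↔ ∀ w ∈ M, fucikEnergyDeriv ι a b u w = 0 :=
    (exists_eq_add_iff_forall_le_add (codisjoint_iff.2 hsup).symm hτ).trans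
      (forall_fucikEnergy_le_add_iff ha.2 hb.2 hM)
  simp only [mem_fucikSolutions_iff_of_sup_eq_top hsup, ← fucikEnergyDeriv_eq_zero_iff,
    Set.mem_inter_iff, Set.mem_ofPred_eq, hSN, hSM, implies_true, true_and]
  exact fun u hu ↦ ⟨((mem_fucikSolutions_iff_of_sup_eq_top hsup).1 hu).1,
    fucikEnergy_eq_zero_of_mem_fucikSolutions hu⟩

end Fucik

theorem K_eq_inter_null_characterization
    {Ω : Type*} [MeasurableSpace Ω] (μ : Measure Ω)
    {H : Type*} [NormedAddCommGroup H] [InnerProductSpace ℝ H] [CompleteSpace H]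
    (ι : H →ₗ[ℝ] Lp ℝ 2 μ) (hι : Function.Injective ι)
    (C : ℝ) (hC : 0 < C) (hιC : ∀ u : H, ‖ι u‖ ≤ C * ‖u‖)
    (I : H → ℝ → ℝ → ℝ)
    (hI : ∀ u a b, I u a b = ‖u‖ ^ 2 / 2 -
      (∫ x, (b * (Lp.posPart (ι u)) x ^ 2 + a * (Lp.negPart (ι u)) x ^ 2) ∂μ) / 2)
    (lam₀ lam₁ lam₂ : ℝ) (hlam₀ : 0 < lam₀) (hlam₀₁ : lam₀ < lam₁) (hlam₁₂ : lam₁ < lam₂)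
    (N E M : Submodule ℝ H)
    (hNcl : IsClosed (N : Set H)) (hEcl : IsClosed (E : Set H)) (hMcl : IsClosed (M : Set H))
    (hNfd : FiniteDimensional ℝ N) (hEfd : FiniteDimensional ℝ E) (hEne : E ≠ ⊥)
    (horthNE : ∀ v ∈ N, ∀ y ∈ E, ⟪v, y⟫ = 0)
    (horthNM : ∀ v ∈ N, ∀ w ∈ M, ⟪v, w⟫ = 0)
    (horthEM : ∀ y ∈ E, ∀ w ∈ M, ⟪y, w⟫ = 0)
    (horthNE2 : ∀ v ∈ N, ∀ y ∈ E, ∫ x, (ι v) x * (ι y) x ∂μ = 0)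
    (horthNM2 : ∀ v ∈ N, ∀ w ∈ M, ∫ x, (ι v) x * (ι w) x ∂μ = 0)
    (horthEM2 : ∀ y ∈ E, ∀ w ∈ M, ∫ x, (ι y) x * (ι w) x ∂μ = 0)
    (hdirect : N ⊔ E ⊔ M = ⊤)
    (hNspec : ∀ v ∈ N, ‖v‖ ^ 2 ≤ lam₀ * ‖ι v‖ ^ 2)
    (hEspec : ∀ y ∈ E, ∀ u : H, ⟪y, u⟫ = lam₁ * ∫ x, (ι y) x * (ι u) x ∂μ)
    (hMspec : ∀ w ∈ M, lam₂ * ‖ι w‖ ^ 2 ≤ ‖w‖ ^ 2)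
    (hcompact : ∀ s : Set H, Bornology.IsBounded s →
      IsCompact (closure ((fun u => ι u) '' s)))
    (K : ℝ → ℝ → Set H)
    (hK : ∀ a b, K a b = {u : H | ∀ v : H,
      ⟪u, v⟫ = ∫ x, (b * (Lp.posPart (ι u)) x - a * (Lp.negPart (ι u)) x) * (ι v) x ∂μ})
    (θ : ℝ → ℝ → H → H)
    (hθ : ∀ a b, a ∈ Set.Ioo lam₀ lam₂ → b ∈ Set.Ioo lam₀ lam₂ → ∀ w ∈ E ⊔ M,
      θ a b w ∈ N ∧ (∀ v ∈ N, I (v + w) a b ≤ I (θ a b w + w) a b) ∧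
      (∀ v ∈ N, (∀ v' ∈ N, I (v' + w) a b ≤ I (v + w) a b) → v = θ a b w))
    (τ : ℝ → ℝ → H → H)
    (hτ : ∀ a b, a ∈ Set.Ioo lam₀ lam₂ → b ∈ Set.Ioo lam₀ lam₂ → ∀ v ∈ N ⊔ E,
      τ a b v ∈ M ∧ (∀ w ∈ M, I (v + τ a b v) a b ≤ I (v + w) a b) ∧
      (∀ w ∈ M, (∀ w' ∈ M, I (v + w) a b ≤ I (v + w') a b) → w = τ a b v))
    (Sk Sk' : ℝ → ℝ → Set H)
    (hSk : ∀ a b, Sk a b = {u : H | ∃ w ∈ E ⊔ M, u = θ a b w + w})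
    (hSk' : ∀ a b, Sk' a b = {u : H | ∃ v ∈ N ⊔ E, u = v + τ a b v})
    :
    ∀ a b, a ∈ Set.Ioo lam₀ lam₂ → b ∈ Set.Ioo lam₀ lam₂ →
      (∀ u : H, u ∈ K a b ↔ (u ∈ Sk a b ∩ Sk' a b ∧ ∀ y ∈ E,
        ⟪u, y⟫ = ∫ x, (b * (Lp.posPart (ι u)) x - a * (Lp.negPart (ι u)) x) * (ι y) x ∂μ)) ∧
      K a b ⊆ {u ∈ Sk a b ∩ Sk' a b | I u a b = 0} := by
  intro a b ha hb
  obtain rfl : I = fun u a b ↦ fucikEnergy ι a b u := by ext u a b; exact hI u a b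
  rw [hK, hSk, hSk']
  exact K_eq_inter_null_characterization_general hdirect hNspec hMspec
    (Set.Ioo_subset_Icc_self ha) (Set.Ioo_subset_Icc_self hb) (hθ a b ha hb) (hτ a b ha hb)
end

section
/- For every (a, b) ∈ Q_k, the equality K(a, b) = S_k(a, b) ∩ S^k(a, b) holds if and only if b = ν(a) and b = μ(a), i.e., if and only if (a, b) lies on both the minimal curve b = ν(a) and the maximal curve b = μ(a). -/
open MeasureTheory RealInnerProductSpace

/-!
At every point the energy `I(·, a, b)` lies between two quadratic models that are negative definite
along `N_{k-1}` and positive definite along `M_k`. Hence `S_k` and `S^k` consist of the points at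
which `dI` vanishes on `N_{k-1}` and on `M_k` respectively, and `K ⊆ S_k ∩ S^k`. Moreover, `(a, b)`
being on or below the minimal curve means that the maxima of `I` over the translates of `N_{k-1}`
are nonnegative, and being on or above the maximal curve that its minima over the translates of
`M_k` are nonpositive.

On both curves, a point `u ∈ S_k ∩ S^k` satisfies `I u ≤ 0`, being a minimum over a translate of
`M_k`, while for every `y ∈ E_k` some `v ∈ N_{k-1}` gives `I (u + y + v) ≥ 0 ≥ I u`. As `v` matters
only at second order, and with a favourable sign, `dI` vanishes at `u` on `E_k` as well.

Conversely, if `S_k ∩ S^k = K` then `I` vanishes on `S_k ∩ S^k`, which by a saddle argument meets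
every translate of `N_{k-1} ⊕ M_k`; this yields both sign conditions at `b`. Some point of
`S_k ∩ S^k` has a nonzero positive part, so `b ↦ I` is strictly decreasing there, and the first
condition fails above `b`, the second below.
-/

namespace DancerFucik

/-! ### Hilbert lattices -/

section HilbertLattice

variable {L : Type*} [NormedAddCommGroup L] [InnerProductSpace ℝ L] [Lattice L] [HasSolidNorm L]
  [IsOrderedAddMonoid L]

theorem inner_nonneg {f g : L} (hf : 0 ≤ f) (hg : 0 ≤ g) : 0 ≤ ⟪f, g⟫ := by
  have habs : |f - g| ≤ |f + g| := by
    rw [abs_of_nonneg (add_nonneg hf hg), abs_le']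
    constructor
    · exact (sub_le_self f hg).trans (le_add_of_nonneg_right hg)
    · rw [neg_sub]
      exact (sub_le_self g hf).trans (le_add_of_nonneg_left hf)
  have hnorm : ‖f - g‖ ≤ ‖f + g‖ := norm_le_norm_of_abs_le_abs habs
  have hsq : ‖f - g‖ ^ 2 ≤ ‖f + g‖ ^ 2 := pow_le_pow_left₀ (norm_nonneg _) hnorm 2
  rw [norm_sub_sq_real, norm_add_sq_real] at hsq
  linarith

theorem inner_posPart_negPart (f : L) : ⟪f⁺, f⁻⟫ = 0 := by
  have hsq : ‖f⁺ + f⁻‖ ^ 2 = ‖f⁺ - f⁻‖ ^ 2 := by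
    rw [posPart_add_negPart, posPart_sub_negPart, norm_abs_eq_norm]
  rw [norm_sub_sq_real, norm_add_sq_real] at hsq
  linarith

theorem norm_sq_eq_posPart_add_negPart (f : L) : ‖f‖ ^ 2 = ‖f⁺‖ ^ 2 + ‖f⁻‖ ^ 2 := by
  conv_lhs => rw [← posPart_sub_negPart f, norm_sub_sq_real, inner_posPart_negPart]
  ring

theorem inner_posPart_self (f : L) : ⟪f⁺, f⟫ = ‖f⁺‖ ^ 2 := by
  have h : ⟪f⁺, f⁺ - f⁻⟫ = ‖f⁺‖ ^ 2 := by
    rw [inner_sub_right, inner_posPart_negPart, sub_zero, real_inner_self_eq_norm_sq]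
  rwa [posPart_sub_negPart] at h

theorem inner_negPart_self (f : L) : ⟪f⁻, f⟫ = -‖f⁻‖ ^ 2 := by
  rw [← posPart_neg, ← inner_posPart_self, inner_neg_right, neg_neg]

theorem nonneg_of_forall_inner_nonneg {f : L} (h : ∀ g, 0 ≤ g → 0 ≤ ⟪g, f⟫) : 0 ≤ f := by
  have hneg : 0 ≤ -‖f⁻‖ ^ 2 := inner_negPart_self f ▸ h f⁻ (negPart_nonneg f)
  rw [← negPart_eq_zero, ← norm_eq_zero, ← sq_eq_zero_iff]
  exact le_antisymm (neg_nonneg.1 hneg) (sq_nonneg _)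

theorem posPart_eq_of_sub_eq {f p q : L} (hp : 0 ≤ p) (hq : 0 ≤ q) (hpq : ⟪p, q⟫ = 0)
    (hf : p - q = f) : f⁺ = p := by
  have hdiff : f⁺ - p = f⁻ - q := by
    rw [sub_eq_sub_iff_sub_eq_sub, posPart_sub_negPart, hf]
  have hsq : ‖f⁺ - p‖ ^ 2 = -⟪f⁺, q⟫ - ⟪p, f⁻⟫ := by
    rw [← real_inner_self_eq_norm_sq]
    nth_rw 2 [hdiff]
    rw [inner_sub_left, inner_sub_right, inner_sub_right, inner_posPart_negPart, hpq]
    ring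
  have hle : ‖f⁺ - p‖ ^ 2 ≤ 0 := by
    linarith [inner_nonneg (posPart_nonneg f) hq, inner_nonneg hp (negPart_nonneg f)]
  exact sub_eq_zero.1 (norm_eq_zero.1 (pow_eq_zero_iff two_ne_zero |>.1
    (le_antisymm hle (sq_nonneg _))))

theorem posPart_smul {t : ℝ} (ht : 0 ≤ t) (f : L) : (t • f)⁺ = t • f⁺ := by
  have hsmul {g : L} (hg : 0 ≤ g) : 0 ≤ t • g := nonneg_of_forall_inner_nonneg fun h hh => by
    rw [real_inner_smul_right]
    exact mul_nonneg ht (inner_nonneg hh hg)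
  refine posPart_eq_of_sub_eq (hsmul (posPart_nonneg f)) (hsmul (negPart_nonneg f)) ?_ ?_
  · rw [real_inner_smul_left, real_inner_smul_right, inner_posPart_negPart, mul_zero, mul_zero]
  · rw [← smul_sub, posPart_sub_negPart]

theorem negPart_smul {t : ℝ} (ht : 0 ≤ t) (f : L) : (t • f)⁻ = t • f⁻ := by
  rw [← posPart_neg, ← smul_neg, posPart_smul ht, posPart_neg]

/-- The Bregman divergence of `f ↦ ‖f⁺‖ ^ 2`, that is, the excess at `g` of this convex function
over its first order Taylor polynomial at `f`. -/
noncomputable def posExcess (f g : L) : ℝ := ‖g⁺‖ ^ 2 - ‖f⁺‖ ^ 2 - 2 * ⟪f⁺, g - f⟫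

theorem posExcess_nonneg (f g : L) : 0 ≤ posExcess f g := by
  have hexcess : posExcess f g = ‖g⁺ - f⁺‖ ^ 2 + 2 * ⟪f⁺, g⁻⟫ := by
    have hg : ⟪f⁺, g⟫ = ⟪f⁺, g⁺⟫ - ⟪f⁺, g⁻⟫ := by rw [← inner_sub_right, posPart_sub_negPart]
    rw [posExcess, inner_sub_right, inner_posPart_self, hg, norm_sub_sq_real, real_inner_comm]
    ring
  rw [hexcess]
  linarith [sq_nonneg ‖g⁺ - f⁺‖, inner_nonneg (posPart_nonneg f) (negPart_nonneg g)]

theorem posExcess_add_posExcess_neg (f g : L) :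
    posExcess f g + posExcess (-f) (-g) = ‖g - f‖ ^ 2 := by
  have hinner : ⟪f, g - f⟫ = ⟪f⁺, g - f⟫ - ⟪f⁻, g - f⟫ := by
    rw [← inner_sub_left, posPart_sub_negPart]
  have hsq : ‖g‖ ^ 2 = ‖f‖ ^ 2 + 2 * ⟪f, g - f⟫ + ‖g - f‖ ^ 2 := by
    rw [← norm_add_sq_real, add_sub_cancel]
  rw [posExcess, posExcess, posPart_neg, posPart_neg, ← neg_sub', inner_neg_right]
  linarith [norm_sq_eq_posPart_add_negPart f, norm_sq_eq_posPart_add_negPart g]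

end HilbertLattice

/-! ### Partial maximization -/

theorem convexOn_of_forall_le {X Y : Type*} [AddCommGroup X] [Module ℝ X] {s : Set X} {t : Set Y}
    {F : X → Y → ℝ} {y : X → Y} (hF : ∀ z ∈ t, ConvexOn ℝ s fun x => F x z) (hs : Convex ℝ s)
    (hy : ∀ x ∈ s, y x ∈ t) (hmax : ∀ x ∈ s, ∀ z ∈ t, F x z ≤ F x (y x)) :
    ConvexOn ℝ s fun x => F x (y x) := by
  refine ⟨hs, fun x₁ hx₁ x₂ hx₂ α β hα hβ hαβ => ?_⟩
  have hz := hy _ (hs hx₁ hx₂ hα hβ hαβ)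
  refine ((hF _ hz).2 hx₁ hx₂ hα hβ hαβ).trans ?_
  gcongr
  · exact hmax x₁ hx₁ _ hz
  · exact hmax x₂ hx₂ _ hz

theorem exists_forall_le_of_upperSemicontinuous {X : Type*} [NormedAddCommGroup X] [ProperSpace X]
    {g : X → ℝ} (hg : UpperSemicontinuous g) {κ C : ℝ} (hκ : 0 < κ)
    (hgC : ∀ x, g x ≤ C - κ * ‖x‖ ^ 2) : ∃ x, ∀ x', g x' ≤ g x := by
  set R : ℝ := 1 + |C - g 0| / κ with hR
  have hR₁ : 1 ≤ R := le_add_of_nonneg_right (by positivity)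
  obtain ⟨x, -, hx⟩ := (hg.upperSemicontinuousOn (Metric.closedBall 0 R)).exists_isMaxOn
    ⟨0, Metric.mem_closedBall_self (zero_le_one.trans hR₁)⟩ (isCompact_closedBall 0 R)
  refine ⟨x, fun x' => ?_⟩
  rcases le_or_gt ‖x'‖ R with hx' | hx'
  · exact hx (mem_closedBall_zero_iff.2 hx')
  · have hfar : C - κ * ‖x'‖ ^ 2 ≤ g 0 := by
      have hκR : κ * R = κ + |C - g 0| := by rw [hR]; field_simp
      have hsq : κ * R ≤ κ * ‖x'‖ ^ 2 := by gcongr; nlinarith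
      linarith [le_abs_self (C - g 0)]
    exact ((hgC x').trans hfar).trans
      (hx (Metric.mem_closedBall_self (zero_le_one.trans hR₁)))

section MaximizerMap

variable {H : Type*} [AddCommGroup H] [Module ℝ H] {F G : H → ℝ} {V W : Submodule ℝ H}
  {θ τ : H → H}

/-- `θ w` maximizes `F (· + w)` over `V`, for every `w ∈ W`. -/
def IsMaximizerMap (F : H → ℝ) (V W : Submodule ℝ H) (θ : H → H) : Prop :=
  ∀ w ∈ W, θ w ∈ V ∧ ∀ v ∈ V, F (v + w) ≤ F (θ w + w)

/-- `τ w` minimizes `F (w + ·)` over `V`, for every `w ∈ W`. -/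
def IsMinimizerMap (F : H → ℝ) (V W : Submodule ℝ H) (τ : H → H) : Prop :=
  ∀ w ∈ W, τ w ∈ V ∧ ∀ v ∈ V, F (w + τ w) ≤ F (w + v)

/-- On every translate of `V` the function `F` attains its maximum. -/
def AttainsMaxAlong (F : H → ℝ) (V : Submodule ℝ H) : Prop :=
  ∀ u, ∃ v ∈ V, ∀ v' ∈ V, F (u + v') ≤ F (u + v)

/-- Every translate of `V` contains a point at which `F` is nonnegative. When the maxima along `V`
are attained this is the sign condition that defines the minimal curve (`F` the energy, `V` the
space below the eigenvalue) and the maximal curve (`F` minus the energy, `V` the space above). -/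
def SupNonnegAlong (F : H → ℝ) (V : Submodule ℝ H) : Prop :=
  ∀ u, ∃ v ∈ V, 0 ≤ F (u + v)

theorem IsMinimizerMap.neg (h : IsMinimizerMap F V W τ) : IsMaximizerMap (-F) V W τ := by
  refine fun w hw => ⟨(h w hw).1, fun v hv => ?_⟩
  simpa only [Pi.neg_apply, neg_le_neg_iff, add_comm _ w] using (h w hw).2 v hv

theorem IsMaximizerMap.attainsMaxAlong (h : IsMaximizerMap F V W θ) (hVW : V ⊔ W = ⊤) :
    AttainsMaxAlong F V := by
  intro u
  obtain ⟨v, hv, w, hw, rfl⟩ := Submodule.mem_sup.1 (hVW ▸ Submodule.mem_top : u ∈ V ⊔ W)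
  refine ⟨θ w - v, V.sub_mem (h w hw).1 hv, fun v' hv' => ?_⟩
  rw [show v + w + (θ w - v) = θ w + w by abel, add_right_comm]
  exact (h w hw).2 _ (V.add_mem hv hv')

theorem supNonnegAlong_of_mem_closure {P : Type*} [NormedAddCommGroup P] [NormedSpace ℝ P]
    [FiniteDimensional ℝ P] {s : Set P} {F : P → H → ℝ} {p : P} (hs : IsOpen s)
    (hF : ∀ u, ConvexOn ℝ s fun p => F p u)
    (hmax : ∀ p ∈ s, AttainsMaxAlong (F p) V) (hp : p ∈ s)
    (hp' : p ∈ closure {p ∈ s | SupNonnegAlong (F p) V}) : SupNonnegAlong (F p) V := by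
  intro u
  choose! v hv hvmax using fun p hp => hmax p hp u
  have hcont : ContinuousOn (fun p => F p (u + v p)) s :=
    (convexOn_of_forall_le (fun z _ => hF (u + z)) (hF 0).1 hv hvmax).continuousOn hs
  have hnonneg : Set.MapsTo (fun p => F p (u + v p)) {p ∈ s | SupNonnegAlong (F p) V}
      (Set.Ici 0) := by
    rintro q ⟨hq, hqF⟩
    obtain ⟨z, hz, hzF⟩ := hqF u
    exact hzF.trans (hvmax q hq z hz)
  have hmem := ((hcont p hp).mono (Set.sep_subset s _)).mem_closure hp' hnonneg
  exact ⟨v p, hv p hp, isClosed_Ici.closure_subset hmem⟩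

theorem supNonnegAlong_of_forall_le {E : Submodule ℝ H} (htop : V ⊔ E ⊔ W = ⊤)
    (h : ∀ y ∈ E, ∃ v ∈ V, ∃ w ∈ W, ∀ w' ∈ W, 0 ≤ F (y + (v + w) + w')) :
    SupNonnegAlong F V := by
  intro u
  obtain ⟨x, hx, w₀, hw₀, rfl⟩ :=
    Submodule.mem_sup.1 (htop ▸ Submodule.mem_top : u ∈ V ⊔ E ⊔ W)
  obtain ⟨v₀, hv₀, y, hy, rfl⟩ := Submodule.mem_sup.1 hx
  obtain ⟨v, hv, w, hw, hF⟩ := h y hy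
  refine ⟨v - v₀, V.sub_mem hv hv₀, ?_⟩
  convert hF (w₀ - w) (W.sub_mem hw₀ hw) using 2
  abel

end MaximizerMap

section SphereMinimax

variable {H : Type*} [NormedAddCommGroup H] [NormedSpace ℝ H] {F : H → ℝ} {V W : Submodule ℝ H}
  {θ τ : H → H}

/-- The infimum over the unit sphere of `W` of the suprema of `F` along `V`. -/
noncomputable def infSup (F : H → ℝ) (V W : Submodule ℝ H) : ℝ :=
  sInf {t | ∃ w ∈ W, ‖w‖ = 1 ∧ t = sSup {r | ∃ v ∈ V, r = F (v + w)}}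

/-- The supremum over the unit sphere of `W` of the infima of `F` along `V`. -/
noncomputable def supInf (F : H → ℝ) (V W : Submodule ℝ H) : ℝ :=
  sSup {t | ∃ w ∈ W, ‖w‖ = 1 ∧ t = sInf {r | ∃ v ∈ V, r = F (w + v)}}

theorem infSup_neg (F : H → ℝ) (V W : Submodule ℝ H) : infSup (-F) V W = -supInf F V W := by
  have hinner (w : H) : {r | ∃ v ∈ V, r = (-F) (v + w)} = -{r | ∃ v ∈ V, r = F (w + v)} := by
    ext r
    simp only [Set.mem_ofPred_eq, Set.mem_neg, Pi.neg_apply, neg_eq_iff_eq_neg, add_comm w]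
  rw [infSup, supInf, ← Real.sInf_neg]
  congr 1
  ext t
  simp only [Set.mem_ofPred_eq, Set.mem_neg, hinner, Real.sSup_neg, neg_eq_iff_eq_neg]

theorem IsMaximizerMap.sSup_eq (h : IsMaximizerMap F V W θ) {w : H} (hw : w ∈ W) :
    sSup {r | ∃ v ∈ V, r = F (v + w)} = F (θ w + w) := by
  refine IsGreatest.csSup_eq ⟨⟨θ w, (h w hw).1, rfl⟩, ?_⟩
  rintro _ ⟨v, hv, rfl⟩
  exact (h w hw).2 v hv

theorem IsMaximizerMap.zero_le_infSup_iff (h : IsMaximizerMap F V W θ) (hVW : V ⊔ W = ⊤)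
    (hF : ∀ t u, 0 ≤ t → F (t • u) = t ^ 2 * F u) {c : ℝ} (hc : ∀ u, ‖u‖ = 1 → c ≤ F u) :
    0 ≤ infSup F V W ↔ SupNonnegAlong F V := by
  constructor
  · intro hnonneg u
    obtain ⟨v, hv, w, hw, rfl⟩ := Submodule.mem_sup.1 (hVW ▸ Submodule.mem_top : u ∈ V ⊔ W)
    have hbdd : BddBelow {t | ∃ w ∈ W, ‖w‖ = 1 ∧ t = sSup {r | ∃ v ∈ V, r = F (v + w)}} := by
      refine ⟨c, ?_⟩
      rintro _ ⟨w, hw, hw₁, rfl⟩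
      rw [h.sSup_eq hw]
      have hmax := (h w hw).2 0 V.zero_mem
      rw [zero_add] at hmax
      exact (hc w hw₁).trans hmax
    rcases eq_or_ne w 0 with rfl | hw₀
    · refine ⟨-v, V.neg_mem hv, ?_⟩
      simpa using (hF 0 0 le_rfl).ge
    · have hw₁ : ‖w‖⁻¹ • w ∈ W := W.smul_mem _ hw
      have hle : 0 ≤ F (θ (‖w‖⁻¹ • w) + ‖w‖⁻¹ • w) :=
        hnonneg.trans (csInf_le hbdd ⟨_, hw₁, norm_smul_inv_norm hw₀, (h.sSup_eq hw₁).symm⟩)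
      refine ⟨‖w‖ • θ (‖w‖⁻¹ • w) - v, V.sub_mem (V.smul_mem _ (h _ hw₁).1) hv, ?_⟩
      have hscale : v + w + (‖w‖ • θ (‖w‖⁻¹ • w) - v) = ‖w‖ • (θ (‖w‖⁻¹ • w) + ‖w‖⁻¹ • w) := by
        rw [smul_add, smul_inv_smul₀ (norm_ne_zero_iff.2 hw₀)]
        abel
      rw [hscale, hF _ _ (norm_nonneg w)]
      positivity
  · intro hsup
    refine Real.sInf_nonneg ?_
    rintro _ ⟨w, hw, -, rfl⟩
    rw [h.sSup_eq hw]
    obtain ⟨v, hv, hvF⟩ := hsup w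
    exact hvF.trans (add_comm w v ▸ (h w hw).2 v hv)

theorem IsMinimizerMap.supInf_le_zero_iff (h : IsMinimizerMap F V W τ) (hVW : V ⊔ W = ⊤)
    (hF : ∀ t u, 0 ≤ t → F (t • u) = t ^ 2 * F u) {c : ℝ} (hc : ∀ u, ‖u‖ = 1 → F u ≤ c) :
    supInf F V W ≤ 0 ↔ SupNonnegAlong (-F) V := by
  rw [← neg_nonneg, ← infSup_neg]
  refine h.neg.zero_le_infSup_iff hVW (fun t u ht => ?_) fun u hu => neg_le_neg (hc u hu)
  rw [Pi.neg_apply, Pi.neg_apply, hF t u ht, mul_neg]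

end SphereMinimax

/-! ### Functions pinched between quadratic models -/

section QuadraticModels

variable {H : Type*} [AddCommGroup H] [Module ℝ H] {F G : H → ℝ} {D : H → Module.Dual ℝ H}
  {p q : QuadraticForm ℝ H} {u : H} {V V' W : Submodule ℝ H} {θ τ : H → H}

/-- `F` lies between the second order polynomials with first order part `D u` and quadratic parts
`p` and `q`, at every base point `u`; in particular `D` is the derivative of `F`. -/
structure IsPinched (F : H → ℝ) (D : H → Module.Dual ℝ H) (p q : QuadraticForm ℝ H) : Prop where
  lower : ∀ u d, F u + D u d + p d / 2 ≤ F (u + d)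
  upper : ∀ u d, F (u + d) ≤ F u + D u d + q d / 2

/-- The restriction of the quadratic form `q` to the subspace `V` is negative definite. -/
def NegDefOn (q : QuadraticForm ℝ H) (V : Submodule ℝ H) : Prop :=
  ∀ v ∈ V, v ≠ 0 → q v < 0

theorem NegDefOn.nonpos (hq : NegDefOn q V) {v : H} (hv : v ∈ V) : q v ≤ 0 := by
  rcases eq_or_ne v 0 with rfl | hv₀
  · rw [QuadraticMap.map_zero]
  · exact (hq v hv hv₀).le

theorem IsPinched.neg (h : IsPinched F D p q) : IsPinched (-F) (-D) (-q) (-p) where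
  lower u d := by
    simp only [Pi.neg_apply, LinearMap.neg_apply, neg_apply]
    linarith [h.upper u d]
  upper u d := by
    simp only [Pi.neg_apply, LinearMap.neg_apply, neg_apply]
    linarith [h.lower u d]

theorem IsPinched.lt_of_le_ker (h : IsPinched F D p q) (hq : NegDefOn q V)
    (hu : V ≤ (D u).ker) {v : H} (hv : v ∈ V) (hv₀ : v ≠ 0) : F (u + v) < F u := by
  have hD : D u v = 0 := hu hv
  linarith [h.upper u v, hq v hv hv₀]

theorem IsPinched.le_of_le_ker (h : IsPinched F D p q) (hq : NegDefOn q V)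
    (hu : V ≤ (D u).ker) {v : H} (hv : v ∈ V) : F (u + v) ≤ F u := by
  have hD : D u v = 0 := hu hv
  linarith [h.upper u v, hq.nonpos hv]

/- Along the ray `s ↦ u + (s • x + v s)` the correction `v s` is invisible at first order, since `u`
is critical along `V`, and can only lower the quadratic upper bound. -/
theorem IsPinched.le_ker_of_forall_exists (h : IsPinched F D p q) (hq : NegDefOn q V)
    (hu : V ≤ (D u).ker) (hortho : ∀ x ∈ V', ∀ v ∈ V, q.IsOrtho x v)
    (hge : ∀ x ∈ V', ∃ v ∈ V, F u ≤ F (u + (x + v))) : V' ≤ (D u).ker := by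
  intro x hx
  have hparabola (s : ℝ) : 0 ≤ q x / 2 * (s * s) + D u x * s + 0 := by
    have hsx : s • x ∈ V' := V'.smul_mem s hx
    obtain ⟨v, hv, hle⟩ := hge _ hsx
    have hD : D u v = 0 := hu hv
    have hupper := hle.trans (h.upper u (s • x + v))
    rw [map_add, map_smul, hD, QuadraticMap.isOrtho_def.1 (hortho _ hsx v hv),
      QuadraticMap.map_smul, smul_eq_mul, smul_eq_mul] at hupper
    linarith [hq.nonpos hv]
  have hdiscrim : D u x ^ 2 ≤ 0 := by
    simpa only [discrim, mul_zero, sub_zero] using discrim_le_zero hparabola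
  exact pow_eq_zero_iff two_ne_zero |>.1 (le_antisymm hdiscrim (sq_nonneg _))

theorem IsPinched.le_ker_of_forall_le (h : IsPinched F D p q)
    (hmax : ∀ v ∈ V, F (u + v) ≤ F u) : V ≤ (D u).ker := by
  have hker : V ≤ ((-D) u).ker := by
    refine h.neg.le_ker_of_forall_exists (V := ⊥) (fun v hv hv₀ => (hv₀ hv).elim) bot_le
      (fun x _ v hv => ?_) fun x hx => ⟨0, Submodule.zero_mem _, ?_⟩
    · rw [(Submodule.mem_bot ℝ).1 hv]
      exact QuadraticMap.IsOrtho.zero_right x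
    · rw [add_zero]
      exact neg_le_neg (hmax x hx)
  rwa [Pi.neg_apply, LinearMap.ker_neg] at hker

theorem IsPinched.setOf_exists_eq_add_of_isMaximizerMap (h : IsPinched F D p q) (hq : NegDefOn q V)
    (hθ : IsMaximizerMap F V W θ) (hVW : V ⊔ W = ⊤) :
    {u | ∃ w ∈ W, u = θ w + w} = {u | V ≤ (D u).ker} := by
  ext u
  constructor
  · rintro ⟨w, hw, rfl⟩
    refine h.le_ker_of_forall_le fun v hv => ?_
    rw [add_right_comm]
    exact (hθ w hw).2 _ (V.add_mem (hθ w hw).1 hv)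
  · intro hu
    obtain ⟨v, hv, w, hw, rfl⟩ := Submodule.mem_sup.1 (hVW ▸ Submodule.mem_top : u ∈ V ⊔ W)
    refine ⟨w, hw, ?_⟩
    by_contra hne
    have hlt := h.lt_of_le_ker hq hu (V.sub_mem (hθ w hw).1 hv)
      fun hsub => hne (by rw [sub_eq_zero.1 hsub])
    rw [show v + w + (θ w - v) = θ w + w by abel] at hlt
    exact hlt.not_ge ((hθ w hw).2 v hv)

theorem IsPinched.setOf_exists_eq_add_of_isMinimizerMap (h : IsPinched F D p q)
    (hp : NegDefOn (-p) V) (hτ : IsMinimizerMap F V W τ) (hVW : V ⊔ W = ⊤) :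
    {u | ∃ w ∈ W, u = w + τ w} = {u | V ≤ (D u).ker} := by
  simpa only [add_comm, Pi.neg_apply, LinearMap.ker_neg] using
    h.neg.setOf_exists_eq_add_of_isMaximizerMap hp hτ.neg hVW

theorem IsPinched.not_supNonnegAlong (h : IsPinched F D p q) (hq : NegDefOn q V)
    (hu : V ≤ (D u).ker) (hFu : F u ≤ 0) (hGF : ∀ x, G x ≤ F x) (hGu : G u < 0) :
    ¬ SupNonnegAlong G V := by
  intro hG
  obtain ⟨v, hv, hGv⟩ := hG u
  rcases eq_or_ne v 0 with rfl | hv₀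
  · rw [add_zero] at hGv
    exact hGu.not_ge hGv
  · exact ((hGF _).trans_lt (h.lt_of_le_ker hq hu hv hv₀)).not_ge (hFu.trans hGv)

theorem SupNonnegAlong.nonneg_of_le_ker (hF : SupNonnegAlong F V) (h : IsPinched F D p q)
    (hq : NegDefOn q V) (hu : V ≤ (D u).ker) : 0 ≤ F u := by
  obtain ⟨v, hv, hFv⟩ := hF u
  exact hFv.trans (h.le_of_le_ker hq hu hv)

theorem IsPinched.eq_zero_of_supNonnegAlong {N E M : Submodule ℝ H} (h : IsPinched F D p q)
    (hq : NegDefOn q N) (hp : NegDefOn (-p) M) (hortho : ∀ y ∈ E, ∀ v ∈ N, q.IsOrtho y v)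
    (htop : N ⊔ E ⊔ M = ⊤) (hN : SupNonnegAlong F N) (hM : SupNonnegAlong (-F) M)
    (huN : N ≤ (D u).ker) (huM : M ≤ (D u).ker) : D u = 0 := by
  have hFu : F u ≤ 0 := by
    refine neg_nonneg.1 (hM.nonneg_of_le_ker h.neg hp ?_)
    rwa [Pi.neg_apply, LinearMap.ker_neg]
  have huE : E ≤ (D u).ker := h.le_ker_of_forall_exists hq huN hortho fun y _ => by
    obtain ⟨v, hv, hFv⟩ := hN (u + y)
    exact ⟨v, hv, hFu.trans (add_assoc u y v ▸ hFv)⟩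
  exact LinearMap.ker_eq_top.1 (top_le_iff.1 (htop ▸ sup_le (sup_le huN huE) huM))

end QuadraticModels

section Saddle

variable {H : Type*} [NormedAddCommGroup H] [NormedSpace ℝ H] {F : H → ℝ}
  {D : H → Module.Dual ℝ H} {p q : QuadraticForm ℝ H} {N M : Submodule ℝ H}
  [FiniteDimensional ℝ N] {κ : ℝ}

theorem IsPinched.exists_forall_min_le (h : IsPinched F D p q) (hF : Continuous F) (hκ : 0 < κ)
    (hq : ∀ v ∈ N, q v ≤ -κ * ‖v‖ ^ 2) {u : H} (hu : N ≤ (D u).ker) {w : H → H}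
    (hw : ∀ x, w x ∈ M) (hwmin : ∀ x, ∀ w' ∈ M, F (x + w x) ≤ F (x + w')) :
    ∃ v₁ ∈ N, ∀ v ∈ N, F (u + v + w (u + v)) ≤ F (u + v₁ + w (u + v₁)) := by
  have husc : UpperSemicontinuous fun v : N => F (u + v + w (u + v)) := fun v c hc => by
    have hcont : Continuous fun v' : N => F (u + v' + w (u + v)) := by fun_prop
    filter_upwards [hcont.continuousAt.eventually_lt continuousAt_const hc] with v' hv'
    exact (hwmin _ _ (hw _)).trans_lt hv'
  have hcoercive (v : N) : F (u + v + w (u + v)) ≤ F u - κ / 2 * ‖v‖ ^ 2 := by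
    have hmin := hwmin (u + v) 0 M.zero_mem
    have hD : D u v = 0 := hu v.2
    rw [add_zero] at hmin
    rw [Submodule.coe_norm]
    linarith [h.upper u v, hq v v.2]
  obtain ⟨v₁, hv₁⟩ := exists_forall_le_of_upperSemicontinuous husc (half_pos hκ) hcoercive
  exact ⟨v₁, v₁.2, fun v hv => hv₁ ⟨v, hv⟩⟩

theorem IsPinched.exists_saddle (h : IsPinched F D p q) (hF : Continuous F) (hκ : 0 < κ)
    (hq : ∀ v ∈ N, q v ≤ -κ * ‖v‖ ^ 2) (hp : NegDefOn (-p) M)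
    (hortho : ∀ v ∈ N, ∀ w ∈ M, p.IsOrtho v w) (hN : AttainsMaxAlong F N)
    (hM : AttainsMaxAlong (-F) M) (u : H) :
    ∃ v ∈ N, ∃ w ∈ M, N ≤ (D (u + (v + w))).ker ∧ M ≤ (D (u + (v + w))).ker := by
  obtain ⟨v₀, hv₀, hv₀max⟩ := hN u
  have hcrit : N ≤ (D (u + v₀)).ker := h.le_ker_of_forall_le fun v hv => by
    rw [add_assoc]
    exact hv₀max _ (N.add_mem hv₀ hv)
  choose w hw hwmin using hM
  obtain ⟨v₁, hv₁, hv₁max⟩ := h.exists_forall_min_le hF hκ hq hcrit hw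
    fun x w' hw' => neg_le_neg_iff.1 (hwmin x w' hw')
  set U : H := u + v₀ + v₁ + w (u + v₀ + v₁) with hU
  have hUM : M ≤ ((-D) U).ker := h.neg.le_ker_of_forall_le fun w' hw' => by
    rw [hU, add_assoc]
    exact hwmin _ _ (M.add_mem (hw _) hw')
  have hUN : N ≤ ((-D) U).ker := by
    refine h.neg.le_ker_of_forall_exists hp hUM (fun v hv w' hw' => ?_) fun v hv =>
      ⟨w (u + v₀ + (v₁ + v)) - w (u + v₀ + v₁), M.sub_mem (hw _) (hw _), ?_⟩
    · have hvw := QuadraticMap.isOrtho_def.1 (hortho v hv w' hw')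
      rw [QuadraticMap.isOrtho_def, neg_apply, hvw, neg_add]
      rfl
    · have hpoint : U + (v + (w (u + v₀ + (v₁ + v)) - w (u + v₀ + v₁))) =
          u + v₀ + (v₁ + v) + w (u + v₀ + (v₁ + v)) := by rw [hU]; abel
      rw [hpoint]
      exact neg_le_neg (hv₁max _ (N.add_mem hv₁ hv))
  rw [Pi.neg_apply, LinearMap.ker_neg] at hUM hUN
  refine ⟨v₀ + v₁, N.add_mem hv₀ hv₁, w (u + v₀ + v₁), hw _, ?_⟩
  rw [show u + (v₀ + v₁ + w (u + v₀ + v₁)) = U by rw [hU]; abel]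
  exact ⟨hUN, hUM⟩

end Saddle

/-! ### The Fučík energy -/

section FucikEnergy

variable {H L : Type*} [NormedAddCommGroup H] [InnerProductSpace ℝ H] [NormedAddCommGroup L]
  [InnerProductSpace ℝ L]

/-- The quadratic form `u ↦ ‖u‖ ^ 2 - c * ‖ι u‖ ^ 2`, which compares `H` with the spectral level
`c`. -/
noncomputable def gapForm (ι : H →L[ℝ] L) (c : ℝ) : QuadraticForm ℝ H :=
  (LinearMap.BilinMap.toQuadraticMap (innerₗ H) : QuadraticForm ℝ H) -
    c • (LinearMap.BilinMap.toQuadraticMap (innerₗ L) : QuadraticForm ℝ L).comp ι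

theorem gapForm_apply (ι : H →L[ℝ] L) (c : ℝ) (u : H) :
    gapForm ι c u = ‖u‖ ^ 2 - c * ‖ι u‖ ^ 2 := by
  rw [← real_inner_self_eq_norm_sq, ← real_inner_self_eq_norm_sq]
  rfl

theorem gapForm_isOrtho (ι : H →L[ℝ] L) (c : ℝ) {u v : H} (h : ⟪u, v⟫ = 0) (hι : ⟪ι u, ι v⟫ = 0) :
    (gapForm ι c).IsOrtho u v := by
  rw [QuadraticMap.isOrtho_def, gapForm_apply, gapForm_apply, gapForm_apply, map_add,
    norm_add_sq_real, norm_add_sq_real, h, hι]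
  ring

theorem abs_gapForm_le (ι : H →L[ℝ] L) (c : ℝ) (u : H) :
    |gapForm ι c u| ≤ (1 + |c| * ‖ι‖ ^ 2) * ‖u‖ ^ 2 := by
  have hι : ‖ι u‖ ^ 2 ≤ ‖ι‖ ^ 2 * ‖u‖ ^ 2 := by
    rw [← mul_pow]
    exact pow_le_pow_left₀ (norm_nonneg _) (ι.le_opNorm u) 2
  calc |gapForm ι c u| ≤ |‖u‖ ^ 2| + |c * ‖ι u‖ ^ 2| := by
        rw [gapForm_apply]
        exact abs_sub _ _
    _ = ‖u‖ ^ 2 + |c| * ‖ι u‖ ^ 2 := by rw [abs_mul, abs_sq, abs_sq]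
    _ ≤ ‖u‖ ^ 2 + |c| * (‖ι‖ ^ 2 * ‖u‖ ^ 2) := by gcongr
    _ = (1 + |c| * ‖ι‖ ^ 2) * ‖u‖ ^ 2 := by ring

variable [Lattice L] (ι : H →L[ℝ] L) (a b : ℝ)

/-- The functional `I(u, a, b)`, for a bounded operator `ι` from `H` to a Hilbert lattice in place
of the inclusion into `L²`. -/
noncomputable def fucikEnergy (u : H) : ℝ :=
  (‖u‖ ^ 2 - (b * ‖(ι u)⁺‖ ^ 2 + a * ‖(ι u)⁻‖ ^ 2)) / 2

/-- The derivative of `fucikEnergy ι a b` at `u`; its zeros form the set `K(a, b)`. -/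
noncomputable def fucikDeriv (u : H) : Module.Dual ℝ H :=
  innerₗ H u - innerₗ L (b • (ι u)⁺ - a • (ι u)⁻) ∘ₗ (ι : H →ₗ[ℝ] L)

theorem fucikDeriv_apply (u h : H) :
    fucikDeriv ι a b u h = ⟪u, h⟫ - ⟪b • (ι u)⁺ - a • (ι u)⁻, ι h⟫ := rfl

theorem fucikEnergy_eq_add (b' : ℝ) (u : H) :
    fucikEnergy ι a b' u = fucikEnergy ι a b u + (b - b') / 2 * ‖(ι u)⁺‖ ^ 2 := by
  rw [fucikEnergy, fucikEnergy]
  ring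

theorem convexOn_fucikEnergy {s : Set ℝ} (hs : Convex ℝ s) (u : H) :
    ConvexOn ℝ s fun b => fucikEnergy ι a b u := by
  refine ⟨hs, fun b _ b' _ s t _ _ hst => le_of_eq ?_⟩
  simp only [fucikEnergy, smul_eq_mul]
  linear_combination (a * ‖(ι u)⁻‖ ^ 2 - ‖u‖ ^ 2) / 2 * hst

theorem convexOn_neg_fucikEnergy {s : Set ℝ} (hs : Convex ℝ s) (u : H) :
    ConvexOn ℝ s fun b => (-fucikEnergy ι a b) u := by
  refine ⟨hs, fun b _ b' _ s t _ _ hst => le_of_eq ?_⟩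
  simp only [Pi.neg_apply, fucikEnergy, smul_eq_mul]
  linear_combination (‖u‖ ^ 2 - a * ‖(ι u)⁻‖ ^ 2) / 2 * hst

theorem fucikEnergy_add (u d : H) :
    fucikEnergy ι a b (u + d) = fucikEnergy ι a b u + fucikDeriv ι a b u d +
      (‖d‖ ^ 2 - (b * posExcess (ι u) (ι (u + d)) + a * posExcess (-ι u) (-ι (u + d)))) / 2 := by
  have hd : ι (u + d) - ι u = ι d := by rw [map_add, add_sub_cancel_left]
  rw [posExcess, posExcess, ← neg_sub', hd, fucikDeriv_apply, fucikEnergy, fucikEnergy,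
    posPart_neg, posPart_neg, norm_add_sq_real, inner_neg_right, inner_sub_left,
    real_inner_smul_left, real_inner_smul_left]
  ring

theorem fucikEnergy_le_fucikEnergy {b b' : ℝ} (hb : b ≤ b') (u : H) :
    fucikEnergy ι a b' u ≤ fucikEnergy ι a b u := by
  rw [fucikEnergy_eq_add ι a b b']
  linarith [mul_nonneg (sub_nonneg.2 hb) (sq_nonneg ‖(ι u)⁺‖)]

theorem fucikEnergy_lt_fucikEnergy {b b' : ℝ} (hb : b < b') {u : H} (hu : (ι u)⁺ ≠ 0) :
    fucikEnergy ι a b' u < fucikEnergy ι a b u := by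
  rw [fucikEnergy_eq_add ι a b b']
  linarith [mul_pos (sub_pos.2 hb) (pow_pos (norm_pos_iff.2 hu) 2)]

variable [HasSolidNorm L] [IsOrderedAddMonoid L]

theorem continuous_fucikEnergy : Continuous (fucikEnergy ι a b) := by
  have hpos : Continuous fun u => (ι u)⁺ := continuous_posPart.comp ι.continuous
  have hneg : Continuous fun u => (ι u)⁻ := continuous_negPart.comp ι.continuous
  exact ((continuous_norm.pow 2).sub
    (((hpos.norm.pow 2).const_mul b).add ((hneg.norm.pow 2).const_mul a))).div_const 2

theorem fucikEnergy_smul {t : ℝ} (ht : 0 ≤ t) (u : H) :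
    fucikEnergy ι a b (t • u) = t ^ 2 * fucikEnergy ι a b u := by
  simp only [fucikEnergy, map_smul, posPart_smul ht, negPart_smul ht, norm_smul, mul_pow,
    Real.norm_eq_abs, sq_abs]
  ring

theorem fucikDeriv_self (u : H) : fucikDeriv ι a b u u = 2 * fucikEnergy ι a b u := by
  rw [fucikDeriv_apply, fucikEnergy, inner_sub_left, real_inner_smul_left, real_inner_smul_left,
    inner_posPart_self, inner_negPart_self, real_inner_self_eq_norm_sq]
  ring

variable {ι a b} in
theorem fucikEnergy_eq_zero {u : H} (hu : fucikDeriv ι a b u = 0) : fucikEnergy ι a b u = 0 := by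
  have hself := fucikDeriv_self ι a b u
  rw [hu, LinearMap.zero_apply] at hself
  linarith

theorem isPinched_fucikEnergy :
    IsPinched (fucikEnergy ι a b) (fucikDeriv ι a b) (gapForm ι (max a b))
      (gapForm ι (min a b)) := by
  have hsum (u d : H) : posExcess (ι u) (ι (u + d)) + posExcess (-ι u) (-ι (u + d)) =
      ‖ι d‖ ^ 2 := by
    rw [posExcess_add_posExcess_neg, map_add, add_sub_cancel_left]
  have hpos (u d : H) := posExcess_nonneg (ι u) (ι (u + d))
  have hneg (u d : H) := posExcess_nonneg (-ι u) (-ι (u + d))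
  constructor
  · intro u d
    rw [fucikEnergy_add, gapForm_apply, ← hsum u d]
    linarith [mul_le_mul_of_nonneg_right (le_max_right a b) (hpos u d),
      mul_le_mul_of_nonneg_right (le_max_left a b) (hneg u d)]
  · intro u d
    rw [fucikEnergy_add, gapForm_apply, ← hsum u d]
    linarith [mul_le_mul_of_nonneg_right (min_le_right a b) (hpos u d),
      mul_le_mul_of_nonneg_right (min_le_left a b) (hneg u d)]

theorem fucikEnergy_mem_Icc (u : H) :
    fucikEnergy ι a b u ∈ Set.Icc (gapForm ι (max a b) u / 2) (gapForm ι (min a b) u / 2) := by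
  have henergy : fucikEnergy ι a b 0 = 0 := by simp [fucikEnergy]
  have hderiv : fucikDeriv ι a b 0 u = 0 := by simp [fucikDeriv_apply]
  have hlower := (isPinched_fucikEnergy ι a b).lower 0 u
  have hupper := (isPinched_fucikEnergy ι a b).upper 0 u
  rw [henergy, hderiv, zero_add, zero_add, zero_add] at hlower hupper
  exact ⟨hlower, hupper⟩

theorem exists_forall_abs_fucikEnergy_le :
    ∃ c, ∀ u : H, ‖u‖ = 1 → |fucikEnergy ι a b u| ≤ c := by
  refine ⟨max (1 + |max a b| * ‖ι‖ ^ 2) (1 + |min a b| * ‖ι‖ ^ 2) / 2, fun u hu => ?_⟩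
  have hmax := abs_gapForm_le ι (max a b) u
  have hmin := abs_gapForm_le ι (min a b) u
  obtain ⟨hlower, hupper⟩ := fucikEnergy_mem_Icc ι a b u
  rw [hu, one_pow, mul_one] at hmax hmin
  rw [abs_le] at hmax hmin ⊢
  constructor
  · linarith [hmax.1, le_max_left (1 + |max a b| * ‖ι‖ ^ 2) (1 + |min a b| * ‖ι‖ ^ 2)]
  · linarith [hmin.2, le_max_right (1 + |max a b| * ‖ι‖ ^ 2) (1 + |min a b| * ‖ι‖ ^ 2)]

end FucikEnergy

/-! ### Spectral splittings -/

section SpectralSplitting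

/-- `H` is the sum of three subspaces, orthogonal in `H` and with orthogonal images under `ι`, such
that the Rayleigh quotient `‖u‖ ^ 2 / ‖ι u‖ ^ 2` is at most `lam₀` on `N` and at least `lam₂` on
`M`. These are the decomposition `N_{k-1} ⊕ E_k ⊕ M_k` and the eigenvalues below and above `λ_k`. -/
structure IsSpectralSplitting {H L : Type*} [NormedAddCommGroup H] [InnerProductSpace ℝ H]
    [NormedAddCommGroup L] [InnerProductSpace ℝ L] (ι : H →L[ℝ] L) (lam₀ lam₂ : ℝ)
    (N E M : Submodule ℝ H) : Prop where
  sup_eq_top : N ⊔ E ⊔ M = ⊤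
  inner_left_middle : ∀ v ∈ N, ∀ y ∈ E, ⟪v, y⟫ = 0
  inner_left_right : ∀ v ∈ N, ∀ w ∈ M, ⟪v, w⟫ = 0
  inner_middle_right : ∀ y ∈ E, ∀ w ∈ M, ⟪y, w⟫ = 0
  inner_map_left_middle : ∀ v ∈ N, ∀ y ∈ E, ⟪ι v, ι y⟫ = 0
  inner_map_left_right : ∀ v ∈ N, ∀ w ∈ M, ⟪ι v, ι w⟫ = 0
  inner_map_middle_right : ∀ y ∈ E, ∀ w ∈ M, ⟪ι y, ι w⟫ = 0
  norm_sq_le : ∀ v ∈ N, ‖v‖ ^ 2 ≤ lam₀ * ‖ι v‖ ^ 2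
  le_norm_sq : ∀ w ∈ M, lam₂ * ‖ι w‖ ^ 2 ≤ ‖w‖ ^ 2

variable {H L : Type*} [NormedAddCommGroup H] [InnerProductSpace ℝ H] [NormedAddCommGroup L]
  [InnerProductSpace ℝ L] {ι : H →L[ℝ] L} {lam₀ lam₂ : ℝ} {N E M : Submodule ℝ H} {a b c : ℝ}

namespace IsSpectralSplitting

section GapForm

variable (h : IsSpectralSplitting ι lam₀ lam₂ N E M)

include h

theorem gapForm_le (hlam₀ : 0 < lam₀) (hc : 0 ≤ c) {v : H} (hv : v ∈ N) :
    gapForm ι c v ≤ -(c / lam₀ - 1) * ‖v‖ ^ 2 := by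
  have hdiv : c / lam₀ * ‖v‖ ^ 2 ≤ c * ‖ι v‖ ^ 2 := by
    calc c / lam₀ * ‖v‖ ^ 2 ≤ c / lam₀ * (lam₀ * ‖ι v‖ ^ 2) :=
          mul_le_mul_of_nonneg_left (h.norm_sq_le v hv) (div_nonneg hc hlam₀.le)
      _ = c * ‖ι v‖ ^ 2 := by field_simp
  rw [gapForm_apply]
  linarith

theorem negDefOn_gapForm (hlam₀ : 0 < lam₀) (hc : lam₀ < c) : NegDefOn (gapForm ι c) N := by
  intro v hv hv₀
  refine (h.gapForm_le hlam₀ (hlam₀.trans hc).le hv).trans_lt ?_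
  have hc₁ : 0 < c / lam₀ - 1 := sub_pos.2 ((one_lt_div hlam₀).2 hc)
  exact mul_neg_of_neg_of_pos (neg_lt_zero.2 hc₁) (pow_pos (norm_pos_iff.2 hv₀) 2)

theorem negDefOn_neg_gapForm (hc : c < lam₂) : NegDefOn (-gapForm ι c) M := by
  intro w hw hw₀
  rw [neg_apply, gapForm_apply, neg_lt_zero, sub_pos]
  rcases (norm_nonneg (ι w)).eq_or_lt with hιw | hιw
  · rw [← hιw, zero_pow two_ne_zero, mul_zero]
    exact pow_pos (norm_pos_iff.2 hw₀) 2
  · exact (mul_lt_mul_of_pos_right hc (pow_pos hιw 2)).trans_le (h.le_norm_sq w hw)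

theorem left_sup_eq_top : N ⊔ (E ⊔ M) = ⊤ := by rw [← sup_assoc, h.sup_eq_top]

theorem right_sup_eq_top : M ⊔ (N ⊔ E) = ⊤ := by rw [sup_comm, h.sup_eq_top]

end GapForm

section Resonance

variable [Lattice L] [IsOrderedAddMonoid L] (h : IsSpectralSplitting ι lam₀ lam₂ N E M)
  (hlam₀ : 0 < lam₀)

include h hlam₀

/- Where `ι u ≤ 0` the equation for `u` is the linear one with parameter `a`, which is not in the
spectrum on `N` or on `M`. -/
theorem add_eq_zero_of_posPart_eq_zero (ha : a ∈ Set.Ioo lam₀ lam₂) {v y w : H} (hv : v ∈ N)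
    (hy : y ∈ E) (hw : w ∈ M) (hpos : (ι (y + (v + w)))⁺ = 0)
    (huN : N ≤ (fucikDeriv ι a b (y + (v + w))).ker)
    (huM : M ≤ (fucikDeriv ι a b (y + (v + w))).ker) : v + w = 0 := by
  have hlinear (x : H) : fucikDeriv ι a b (y + (v + w)) x =
      ⟪y + (v + w), x⟫ - a * ⟪ι (y + (v + w)), ι x⟫ := by
    have hι : ι (y + (v + w)) = -(ι (y + (v + w)))⁻ := by
      conv_lhs => rw [← posPart_sub_negPart (ι (y + (v + w))), hpos, zero_sub]
    rw [fucikDeriv_apply, hpos, smul_zero, zero_sub, ← smul_neg, ← hι, real_inner_smul_left]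
  have hv₀ : v = 0 := by
    by_contra hne
    have hcrit := (hlinear v).symm.trans (huN hv)
    have hneg := h.negDefOn_gapForm hlam₀ ha.1 v hv hne
    rw [map_add, map_add, inner_add_left, inner_add_left, inner_add_left, inner_add_left,
      real_inner_comm, h.inner_left_middle v hv y hy, real_inner_comm v w,
      h.inner_left_right v hv w hw, real_inner_comm (ι v) (ι y), h.inner_map_left_middle v hv y hy,
      real_inner_comm (ι v) (ι w), h.inner_map_left_right v hv w hw, real_inner_self_eq_norm_sq,
      real_inner_self_eq_norm_sq] at hcrit
    rw [gapForm_apply] at hneg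
    linarith
  have hw₀ : w = 0 := by
    by_contra hne
    have hcrit := (hlinear w).symm.trans (huM hw)
    have hneg := h.negDefOn_neg_gapForm ha.2 w hw hne
    rw [map_add, map_add, inner_add_left, inner_add_left, inner_add_left, inner_add_left,
      h.inner_middle_right y hy w hw, h.inner_left_right v hv w hw,
      h.inner_map_middle_right y hy w hw, h.inner_map_left_right v hv w hw,
      real_inner_self_eq_norm_sq, real_inner_self_eq_norm_sq] at hcrit
    rw [neg_apply, gapForm_apply] at hneg
    linarith
  rw [hv₀, hw₀, add_zero]

end Resonance

section Critical

variable (h : IsSpectralSplitting ι lam₀ lam₂ N E M) (ha : a ∈ Set.Ioo lam₀ lam₂)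
  (hb : b ∈ Set.Ioo lam₀ lam₂)

include h ha hb

theorem negDefOn_neg_gapForm_max : NegDefOn (-gapForm ι (max a b)) M :=
  h.negDefOn_neg_gapForm (max_lt ha.2 hb.2)

variable (hlam₀ : 0 < lam₀)

include hlam₀

theorem negDefOn_gapForm_min : NegDefOn (gapForm ι (min a b)) N :=
  h.negDefOn_gapForm hlam₀ (lt_min ha.1 hb.1)

variable [Lattice L] [HasSolidNorm L] [IsOrderedAddMonoid L]

theorem fucikDeriv_eq_zero_of_supNonnegAlong (hN : SupNonnegAlong (fucikEnergy ι a b) N)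
    (hM : SupNonnegAlong (-fucikEnergy ι a b) M) {u : H} (huN : N ≤ (fucikDeriv ι a b u).ker)
    (huM : M ≤ (fucikDeriv ι a b u).ker) : fucikDeriv ι a b u = 0 :=
  (isPinched_fucikEnergy ι a b).eq_zero_of_supNonnegAlong (h.negDefOn_gapForm_min ha hb hlam₀)
    (h.negDefOn_neg_gapForm_max ha hb)
    (fun y hy v hv => (gapForm_isOrtho ι _ (h.inner_left_middle v hv y hy)
      (h.inner_map_left_middle v hv y hy)).symm)
    h.sup_eq_top hN hM huN huM

variable [FiniteDimensional ℝ N] (hN : AttainsMaxAlong (fucikEnergy ι a b) N)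
  (hM : AttainsMaxAlong (-fucikEnergy ι a b) M)

include hN hM

theorem exists_saddle (u : H) :
    ∃ v ∈ N, ∃ w ∈ M, N ≤ (fucikDeriv ι a b (u + (v + w))).ker ∧
      M ≤ (fucikDeriv ι a b (u + (v + w))).ker :=
  (isPinched_fucikEnergy ι a b).exists_saddle (continuous_fucikEnergy ι a b)
    (sub_pos.2 ((one_lt_div hlam₀).2 (lt_min ha.1 hb.1)))
    (fun _ hv => h.gapForm_le hlam₀ (hlam₀.trans (lt_min ha.1 hb.1)).le hv)
    (h.negDefOn_neg_gapForm_max ha hb)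
    (fun v hv w hw => gapForm_isOrtho ι _ (h.inner_left_right v hv w hw)
      (h.inner_map_left_right v hv w hw)) hN hM u

theorem exists_critical_posPart_ne_zero (hE : ∃ y ∈ E, ι y ≠ 0) :
    ∃ u, N ≤ (fucikDeriv ι a b u).ker ∧ M ≤ (fucikDeriv ι a b u).ker ∧ (ι u)⁺ ≠ 0 := by
  obtain ⟨y, hy, hιy⟩ := hE
  by_contra! hpos
  have hposE {z : H} (hz : z ∈ E) : (ι z)⁺ = 0 := by
    obtain ⟨v, hv, w, hw, huN, huM⟩ := h.exists_saddle ha hb hlam₀ hN hM z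
    have hzero := h.add_eq_zero_of_posPart_eq_zero hlam₀ ha hv hz hw (hpos _ huN huM) huN huM
    simpa only [hzero, add_zero] using hpos _ huN huM
  have hnegPart : (ι y)⁻ = 0 := by
    rw [← posPart_neg, ← map_neg]
    exact hposE (E.neg_mem hy)
  exact hιy (by rw [← posPart_sub_negPart (ι y), hposE hy, hnegPart, sub_zero])

variable (hcrit : ∀ u, N ≤ (fucikDeriv ι a b u).ker → M ≤ (fucikDeriv ι a b u).ker →
  fucikDeriv ι a b u = 0)

include hcrit

theorem isGreatest_setOf_supNonnegAlong (hE : ∃ y ∈ E, ι y ≠ 0) :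
    IsGreatest {b ∈ Set.Ioo lam₀ lam₂ | SupNonnegAlong (fucikEnergy ι a b) N} b := by
  have hpinched := isPinched_fucikEnergy ι a b
  refine ⟨⟨hb, supNonnegAlong_of_forall_le h.sup_eq_top fun y _ => ?_⟩, fun b' hb' => ?_⟩
  · obtain ⟨v, hv, w, hw, huN, huM⟩ := h.exists_saddle ha hb hlam₀ hN hM y
    refine ⟨v, hv, w, hw, fun w' hw' => ?_⟩
    have hle := hpinched.neg.le_of_le_ker (h.negDefOn_neg_gapForm_max ha hb)
      (by rwa [Pi.neg_apply, LinearMap.ker_neg]) hw'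
    exact (fucikEnergy_eq_zero (hcrit _ huN huM)).ge.trans (neg_le_neg_iff.1 hle)
  · by_contra! hlt
    obtain ⟨u, huN, huM, hpos⟩ := h.exists_critical_posPart_ne_zero ha hb hlam₀ hN hM hE
    have hzero := fucikEnergy_eq_zero (hcrit u huN huM)
    exact hpinched.not_supNonnegAlong (h.negDefOn_gapForm_min ha hb hlam₀) huN hzero.le
      (fucikEnergy_le_fucikEnergy ι a hlt.le)
      ((fucikEnergy_lt_fucikEnergy ι a hlt hpos).trans_eq hzero) hb'.2

theorem isLeast_setOf_supNonnegAlong_neg (hE : ∃ y ∈ E, ι y ≠ 0) :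
    IsLeast {b ∈ Set.Ioo lam₀ lam₂ | SupNonnegAlong (-fucikEnergy ι a b) M} b := by
  have hpinched := isPinched_fucikEnergy ι a b
  have htop : M ⊔ E ⊔ N = ⊤ := by rw [sup_right_comm, sup_assoc, h.right_sup_eq_top]
  refine ⟨⟨hb, supNonnegAlong_of_forall_le htop fun y _ => ?_⟩, fun b' hb' => ?_⟩
  · obtain ⟨v, hv, w, hw, huN, huM⟩ := h.exists_saddle ha hb hlam₀ hN hM y
    refine ⟨w, hw, v, hv, fun v' hv' => ?_⟩
    rw [add_comm w v, Pi.neg_apply, neg_nonneg]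
    exact (hpinched.le_of_le_ker (h.negDefOn_gapForm_min ha hb hlam₀) huN hv').trans_eq
      (fucikEnergy_eq_zero (hcrit _ huN huM))
  · by_contra! hlt
    obtain ⟨u, huN, huM, hpos⟩ := h.exists_critical_posPart_ne_zero ha hb hlam₀ hN hM hE
    have hzero := fucikEnergy_eq_zero (hcrit u huN huM)
    exact hpinched.neg.not_supNonnegAlong (h.negDefOn_neg_gapForm_max ha hb)
      (by rwa [Pi.neg_apply, LinearMap.ker_neg]) (neg_nonpos.2 hzero.ge)
      (fun x => neg_le_neg (fucikEnergy_le_fucikEnergy ι a hlt.le x))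
      (neg_lt_zero.2 (hzero.symm.trans_lt (fucikEnergy_lt_fucikEnergy ι a hlt hpos))) hb'.2

end Critical
end IsSpectralSplitting
end SpectralSplitting

/-! ### The minimal and maximal curves -/

section Curves

theorem eq_csSup_iff_isGreatest {s : Set ℝ} {b : ℝ} (hs : BddAbove s) (hb : b ≠ 0)
    (hmem : b ∈ closure s → b ∈ s) : b = sSup s ↔ IsGreatest s b := by
  refine ⟨fun hsup => ?_, fun hgreatest => hgreatest.csSup_eq.symm⟩
  have hne : s.Nonempty := by
    rw [Set.nonempty_iff_ne_empty]
    rintro rfl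
    exact hb (hsup.trans Real.sSup_empty)
  exact ⟨hmem (hsup ▸ csSup_mem_closure hne hs), hsup ▸ fun x hx => le_csSup hs hx⟩

theorem eq_csInf_iff_isLeast {s : Set ℝ} {b : ℝ} (hs : BddBelow s) (hb : b ≠ 0)
    (hmem : b ∈ closure s → b ∈ s) : b = sInf s ↔ IsLeast s b := by
  refine ⟨fun hinf => ?_, fun hleast => hleast.csInf_eq.symm⟩
  have hne : s.Nonempty := by
    rw [Set.nonempty_iff_ne_empty]
    rintro rfl
    exact hb (hinf.trans Real.sInf_empty)
  exact ⟨hmem (hinf ▸ csInf_mem_closure hne hs), hinf ▸ fun x hx => csInf_le hs hx⟩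

variable {H L : Type*} [NormedAddCommGroup H] [InnerProductSpace ℝ H] [NormedAddCommGroup L]
  [InnerProductSpace ℝ L] [Lattice L]

/-- The minimal curve `ν(a)`, with `V` the space below the eigenvalue and `W` its complement. -/
noncomputable def minimalCurve (ι : H →L[ℝ] L) (lam₀ lam₂ : ℝ) (V W : Submodule ℝ H) (a : ℝ) : ℝ :=
  sSup {b ∈ Set.Ioo lam₀ lam₂ | 0 ≤ infSup (fucikEnergy ι a b) V W}

/-- The maximal curve `μ(a)`, with `V` the space above the eigenvalue and `W` its complement. -/
noncomputable def maximalCurve (ι : H →L[ℝ] L) (lam₀ lam₂ : ℝ) (V W : Submodule ℝ H) (a : ℝ) : ℝ :=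
  sInf {b ∈ Set.Ioo lam₀ lam₂ | supInf (fucikEnergy ι a b) V W ≤ 0}

variable [HasSolidNorm L] [IsOrderedAddMonoid L] {ι : H →L[ℝ] L} {lam₀ lam₂ a b : ℝ}
  {V W : Submodule ℝ H} {θ τ : ℝ → H → H} (hlam₀ : 0 < lam₀) (hb : b ∈ Set.Ioo lam₀ lam₂)
  (hVW : V ⊔ W = ⊤)

include hlam₀ hb hVW

theorem eq_minimalCurve_iff
    (hθ : ∀ b ∈ Set.Ioo lam₀ lam₂, IsMaximizerMap (fucikEnergy ι a b) V W (θ b)) :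
    b = minimalCurve ι lam₀ lam₂ V W a ↔
      IsGreatest {b ∈ Set.Ioo lam₀ lam₂ | SupNonnegAlong (fucikEnergy ι a b) V} b := by
  have hset : {b ∈ Set.Ioo lam₀ lam₂ | 0 ≤ infSup (fucikEnergy ι a b) V W} =
      {b ∈ Set.Ioo lam₀ lam₂ | SupNonnegAlong (fucikEnergy ι a b) V} := by
    ext b
    refine and_congr_right fun hb => ?_
    obtain ⟨c, hc⟩ := exists_forall_abs_fucikEnergy_le ι a b
    exact (hθ b hb).zero_le_infSup_iff hVW (fun t u ht => fucikEnergy_smul ι a b ht u)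
      fun u hu => (abs_le.1 (hc u hu)).1
  rw [minimalCurve, hset]
  refine eq_csSup_iff_isGreatest (bddAbove_Ioo.mono (Set.sep_subset _ _)) (hlam₀.trans hb.1).ne'
    fun hclosure => ⟨hb, supNonnegAlong_of_mem_closure isOpen_Ioo
      (fun u => convexOn_fucikEnergy ι a (convex_Ioo lam₀ lam₂) u)
      (fun b hb => (hθ b hb).attainsMaxAlong hVW) hb hclosure⟩

theorem eq_maximalCurve_iff
    (hτ : ∀ b ∈ Set.Ioo lam₀ lam₂, IsMinimizerMap (fucikEnergy ι a b) V W (τ b)) :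
    b = maximalCurve ι lam₀ lam₂ V W a ↔
      IsLeast {b ∈ Set.Ioo lam₀ lam₂ | SupNonnegAlong (-fucikEnergy ι a b) V} b := by
  have hset : {b ∈ Set.Ioo lam₀ lam₂ | supInf (fucikEnergy ι a b) V W ≤ 0} =
      {b ∈ Set.Ioo lam₀ lam₂ | SupNonnegAlong (-fucikEnergy ι a b) V} := by
    ext b
    refine and_congr_right fun hb => ?_
    obtain ⟨c, hc⟩ := exists_forall_abs_fucikEnergy_le ι a b
    exact (hτ b hb).supInf_le_zero_iff hVW (fun t u ht => fucikEnergy_smul ι a b ht u)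
      fun u hu => (abs_le.1 (hc u hu)).2
  rw [maximalCurve, hset]
  refine eq_csInf_iff_isLeast (bddBelow_Ioo.mono (Set.sep_subset _ _)) (hlam₀.trans hb.1).ne'
    fun hclosure => ⟨hb, supNonnegAlong_of_mem_closure
      (F := fun b => -fucikEnergy ι a b) isOpen_Ioo
      (fun u => convexOn_neg_fucikEnergy ι a (convex_Ioo lam₀ lam₂) u)
      (fun b hb => (hτ b hb).neg.attainsMaxAlong hVW) hb hclosure⟩

end Curves

/-! ### The inclusion into `L²` -/

section LTwo

variable {Ω : Type*} [MeasurableSpace Ω] {μ : Measure Ω}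

theorem inner_eq_integral_mul (f g : Lp ℝ 2 μ) : ⟪f, g⟫ = ∫ x, f x * g x ∂μ := by
  simp only [L2.inner_def, RCLike.inner_apply', conj_trivial]

theorem integral_sq_add_sq (a b : ℝ) (f g : Lp ℝ 2 μ) :
    ∫ x, (b * f x ^ 2 + a * g x ^ 2) ∂μ = b * ‖f‖ ^ 2 + a * ‖g‖ ^ 2 := by
  have hsq (f : Lp ℝ 2 μ) : ‖f‖ ^ 2 = ∫ x, f x ^ 2 ∂μ := by
    rw [← real_inner_self_eq_norm_sq, inner_eq_integral_mul]
    simp only [sq]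
  have hint (f : Lp ℝ 2 μ) : Integrable (fun x => f x ^ 2) μ := (Lp.memLp f).integrable_sq
  rw [integral_add ((hint f).const_mul b) ((hint g).const_mul a), integral_const_mul,
    integral_const_mul, hsq, hsq]

theorem integral_sub_mul (a b : ℝ) (f g h : Lp ℝ 2 μ) :
    ∫ x, (b * f x - a * g x) * h x ∂μ = ⟪b • f - a • g, h⟫ := by
  rw [inner_eq_integral_mul]
  refine integral_congr_ae ?_
  filter_upwards [Lp.coeFn_sub (b • f) (a • g), Lp.coeFn_smul b f, Lp.coeFn_smul a g]
    with x hsub hf hg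
  rw [hsub, Pi.sub_apply, hf, hg, Pi.smul_apply, Pi.smul_apply, smul_eq_mul, smul_eq_mul]

theorem lp_posPart_eq (f : Lp ℝ 2 μ) : Lp.posPart f = f⁺ := by
  refine Lp.ext ?_
  filter_upwards [Lp.coeFn_posPart f, Lp.coeFn_sup f 0, Lp.coeFn_zero ℝ 2 μ] with x hpos hsup hzero
  rw [hpos, posPart_def, hsup, Pi.sup_apply, hzero, Pi.zero_apply]

theorem lp_negPart_eq (f : Lp ℝ 2 μ) : Lp.negPart f = f⁻ := by
  rw [← posPart_neg, ← lp_posPart_eq, Lp.negPart]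

variable {H : Type*} [NormedAddCommGroup H] [InnerProductSpace ℝ H] (ι : H →L[ℝ] Lp ℝ 2 μ)
  (a b : ℝ) (u : H)

theorem fucikEnergy_eq_integral : fucikEnergy ι a b u = ‖u‖ ^ 2 / 2 -
    (∫ x, (b * (Lp.posPart (ι u)) x ^ 2 + a * (Lp.negPart (ι u)) x ^ 2) ∂μ) / 2 := by
  rw [fucikEnergy, integral_sq_add_sq, lp_posPart_eq, lp_negPart_eq, sub_div]

theorem fucikDeriv_eq_zero_iff_integral : fucikDeriv ι a b u = 0 ↔ ∀ v,
    ⟪u, v⟫ = ∫ x, (b * (Lp.posPart (ι u)) x - a * (Lp.negPart (ι u)) x) * (ι v) x ∂μ := by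
  simp only [LinearMap.ext_iff, fucikDeriv_apply, LinearMap.zero_apply, sub_eq_zero,
    integral_sub_mul, lp_posPart_eq, lp_negPart_eq]

end LTwo

end DancerFucik

open DancerFucik in
theorem K_eq_null_manifold_iff_on_both_curves_general
    {H L : Type*} [NormedAddCommGroup H] [InnerProductSpace ℝ H] [NormedAddCommGroup L]
    [InnerProductSpace ℝ L] [Lattice L] [HasSolidNorm L] [IsOrderedAddMonoid L]
    {ι : H →L[ℝ] L} {lam₀ lam₂ : ℝ} {N E M : Submodule ℝ H} [FiniteDimensional ℝ N]
    (hlam₀ : 0 < lam₀) (h : IsSpectralSplitting ι lam₀ lam₂ N E M) (hE : ∃ y ∈ E, ι y ≠ 0)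
    {a b : ℝ} (ha : a ∈ Set.Ioo lam₀ lam₂) (hb : b ∈ Set.Ioo lam₀ lam₂) {θ τ : ℝ → H → H}
    (hθ : ∀ b ∈ Set.Ioo lam₀ lam₂, IsMaximizerMap (fucikEnergy ι a b) N (E ⊔ M) (θ b))
    (hτ : ∀ b ∈ Set.Ioo lam₀ lam₂, IsMinimizerMap (fucikEnergy ι a b) M (N ⊔ E) (τ b)) :
    {u | fucikDeriv ι a b u = 0} =
        {u | ∃ w ∈ E ⊔ M, u = θ b w + w} ∩ {u | ∃ v ∈ N ⊔ E, u = v + τ b v} ↔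
      b = minimalCurve ι lam₀ lam₂ N (E ⊔ M) a ∧ b = maximalCurve ι lam₀ lam₂ M (N ⊔ E) a := by
  have hpinched := isPinched_fucikEnergy ι a b
  rw [eq_minimalCurve_iff hlam₀ hb h.left_sup_eq_top hθ,
    eq_maximalCurve_iff hlam₀ hb h.right_sup_eq_top hτ,
    hpinched.setOf_exists_eq_add_of_isMaximizerMap (h.negDefOn_gapForm_min ha hb hlam₀) (hθ b hb)
      h.left_sup_eq_top,
    hpinched.setOf_exists_eq_add_of_isMinimizerMap (h.negDefOn_neg_gapForm_max ha hb) (hτ b hb)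
      h.right_sup_eq_top]
  constructor
  · intro hK
    have hN := (hθ b hb).attainsMaxAlong h.left_sup_eq_top
    have hM := (hτ b hb).neg.attainsMaxAlong h.right_sup_eq_top
    have hcrit (u : H) (huN : N ≤ (fucikDeriv ι a b u).ker) (huM : M ≤ (fucikDeriv ι a b u).ker) :
        fucikDeriv ι a b u = 0 := hK.ge ⟨huN, huM⟩
    exact ⟨h.isGreatest_setOf_supNonnegAlong ha hb hlam₀ hN hM hcrit hE,
      h.isLeast_setOf_supNonnegAlong_neg ha hb hlam₀ hN hM hcrit hE⟩
  · rintro ⟨hgreatest, hleast⟩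
    refine Set.Subset.antisymm (fun u hu => ?_) fun u hu =>
      h.fucikDeriv_eq_zero_of_supNonnegAlong ha hb hlam₀ hgreatest.1.2 hleast.1.2 hu.1 hu.2
    have hker : (fucikDeriv ι a b u).ker = ⊤ := LinearMap.ker_eq_top.2 hu
    exact ⟨le_top.trans hker.ge, le_top.trans hker.ge⟩

theorem K_eq_null_manifold_iff_on_both_curves
    {Ω : Type*} [MeasurableSpace Ω] (μ : Measure Ω)
    {H : Type*} [NormedAddCommGroup H] [InnerProductSpace ℝ H] [CompleteSpace H]
    (ι : H →ₗ[ℝ] Lp ℝ 2 μ) (hι : Function.Injective ι)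
    (C : ℝ) (hC : 0 < C) (hιC : ∀ u : H, ‖ι u‖ ≤ C * ‖u‖)
    (I : H → ℝ → ℝ → ℝ)
    (hI : ∀ u a b, I u a b = ‖u‖ ^ 2 / 2 -
      (∫ x, (b * (Lp.posPart (ι u)) x ^ 2 + a * (Lp.negPart (ι u)) x ^ 2) ∂μ) / 2)
    (lam₀ lam₁ lam₂ : ℝ) (hlam₀ : 0 < lam₀) (hlam₀₁ : lam₀ < lam₁) (hlam₁₂ : lam₁ < lam₂)
    (N E M : Submodule ℝ H)
    (hNcl : IsClosed (N : Set H)) (hEcl : IsClosed (E : Set H)) (hMcl : IsClosed (M : Set H))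
    (hNfd : FiniteDimensional ℝ N) (hEfd : FiniteDimensional ℝ E) (hEne : E ≠ ⊥)
    (horthNE : ∀ v ∈ N, ∀ y ∈ E, ⟪v, y⟫ = 0)
    (horthNM : ∀ v ∈ N, ∀ w ∈ M, ⟪v, w⟫ = 0)
    (horthEM : ∀ y ∈ E, ∀ w ∈ M, ⟪y, w⟫ = 0)
    (horthNE2 : ∀ v ∈ N, ∀ y ∈ E, ∫ x, (ι v) x * (ι y) x ∂μ = 0)
    (horthNM2 : ∀ v ∈ N, ∀ w ∈ M, ∫ x, (ι v) x * (ι w) x ∂μ = 0)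
    (horthEM2 : ∀ y ∈ E, ∀ w ∈ M, ∫ x, (ι y) x * (ι w) x ∂μ = 0)
    (hdirect : N ⊔ E ⊔ M = ⊤)
    (hNspec : ∀ v ∈ N, ‖v‖ ^ 2 ≤ lam₀ * ‖ι v‖ ^ 2)
    (hEspec : ∀ y ∈ E, ∀ u : H, ⟪y, u⟫ = lam₁ * ∫ x, (ι y) x * (ι u) x ∂μ)
    (hMspec : ∀ w ∈ M, lam₂ * ‖ι w‖ ^ 2 ≤ ‖w‖ ^ 2)
    (hcompact : ∀ s : Set H, Bornology.IsBounded s →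
      IsCompact (closure ((fun u => ι u) '' s)))
    (K : ℝ → ℝ → Set H)
    (hK : ∀ a b, K a b = {u : H | ∀ v : H,
      ⟪u, v⟫ = ∫ x, (b * (Lp.posPart (ι u)) x - a * (Lp.negPart (ι u)) x) * (ι v) x ∂μ})
    (θ : ℝ → ℝ → H → H)
    (hθ : ∀ a b, a ∈ Set.Ioo lam₀ lam₂ → b ∈ Set.Ioo lam₀ lam₂ → ∀ w ∈ E ⊔ M,
      θ a b w ∈ N ∧ (∀ v ∈ N, I (v + w) a b ≤ I (θ a b w + w) a b) ∧
      (∀ v ∈ N, (∀ v' ∈ N, I (v' + w) a b ≤ I (v + w) a b) → v = θ a b w))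
    (τ : ℝ → ℝ → H → H)
    (hτ : ∀ a b, a ∈ Set.Ioo lam₀ lam₂ → b ∈ Set.Ioo lam₀ lam₂ → ∀ v ∈ N ⊔ E,
      τ a b v ∈ M ∧ (∀ w ∈ M, I (v + τ a b v) a b ≤ I (v + w) a b) ∧
      (∀ w ∈ M, (∀ w' ∈ M, I (v + w) a b ≤ I (v + w') a b) → w = τ a b v))
    (Sk Sk' : ℝ → ℝ → Set H)
    (hSk : ∀ a b, Sk a b = {u : H | ∃ w ∈ E ⊔ M, u = θ a b w + w})
    (hSk' : ∀ a b, Sk' a b = {u : H | ∃ v ∈ N ⊔ E, u = v + τ a b v})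
    (n m : ℝ → ℝ → ℝ)
    (hn : ∀ a b, n a b = sInf {t : ℝ | ∃ w ∈ E ⊔ M, ‖w‖ = 1 ∧
      t = sSup {r : ℝ | ∃ v ∈ N, r = I (v + w) a b}})
    (hm : ∀ a b, m a b = sSup {t : ℝ | ∃ v ∈ N ⊔ E, ‖v‖ = 1 ∧
      t = sInf {r : ℝ | ∃ w ∈ M, r = I (v + w) a b}})
    (ν μf : ℝ → ℝ)
    (hν : ∀ a, ν a = sSup {b ∈ Set.Ioo lam₀ lam₂ | 0 ≤ n a b})
    (hμf : ∀ a, μf a = sInf {b ∈ Set.Ioo lam₀ lam₂ | m a b ≤ 0})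
    :
    ∀ a b, a ∈ Set.Ioo lam₀ lam₂ → b ∈ Set.Ioo lam₀ lam₂ →
      (K a b = Sk a b ∩ Sk' a b ↔ (b = ν a ∧ b = μf a)) := by
  intro a b ha hb
  set ι' : H →L[ℝ] Lp ℝ 2 μ := ι.mkContinuous C hιC
  simp only [← DancerFucik.inner_eq_integral_mul] at horthNE2 horthNM2 horthEM2
  have hsplit : DancerFucik.IsSpectralSplitting ι' lam₀ lam₂ N E M := ⟨hdirect, horthNE, horthNM,
    horthEM, horthNE2, horthNM2, horthEM2, hNspec, hMspec⟩
  have henergy (u : H) (a b : ℝ) : I u a b = DancerFucik.fucikEnergy ι' a b u :=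
    (hI u a b).trans (DancerFucik.fucikEnergy_eq_integral ι' a b u).symm
  have hKset : K a b = {u | DancerFucik.fucikDeriv ι' a b u = 0} := (hK a b).trans
    (Set.ext fun u => (DancerFucik.fucikDeriv_eq_zero_iff_integral ι' a b u).symm)
  have hE : ∃ y ∈ E, ι' y ≠ 0 := by
    obtain ⟨y, hy, hy₀⟩ := E.exists_mem_ne_zero_of_ne_bot hEne
    exact ⟨y, hy, (map_ne_zero_iff ι hι).2 hy₀⟩
  simp only [henergy] at hθ hτ hn hm
  simp only [hKset, hSk, hSk', hν, hμf, hn, hm]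
  exact K_eq_null_manifold_iff_on_both_curves_general hlam₀ hsplit hE ha hb
    (fun b hb w hw => (hθ a b ha hb w hw).imp_right And.left)
    (fun b hb v hv => (hτ a b ha hb v hv).imp_right And.left)
end
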